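/- arXiv:1906.01898 — 2 statements merged into one kernel-verified Lean document; each statement's English description precedes it below -/
import Mathlib

section
/- Let Ω be a simple Toeplitz subshift defined by coding sequences (a_k) and (n_k) whose eventual alphabet has at least two letters. Then every locally constant A : Ω → SL(2,ℝ) is uniform: there is Λ ∈ ℝ such that (1/n) log‖A(n,ω)‖ → Λ as n → ∞ uniformly in ω ∈ Ω. -/
open Filter Topology MeasureTheory

noncomputable section

abbrev SL2 := Matrix.SpecialLinearGroup (Fin 2) ℝ

/-- Operator norm of a 2×2 real matrix acting on Euclidean ℝ². -/
def matNorm (M : Matrix (Fin 2) (Fin 2) ℝ) : ℝ :=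
  ‖LinearMap.toContinuousLinearMap (Matrix.toEuclideanLin M)‖

/-- Norm of an element of SL(2,ℝ). -/
def slNorm (M : SL2) : ℝ := matNorm (M : Matrix (Fin 2) (Fin 2) ℝ)

/-- Action of an SL(2,ℝ) matrix on a euclidean vector. -/
def slAct (M : SL2) (v : EuclideanSpace ℝ (Fin 2)) : EuclideanSpace ℝ (Fin 2) :=
  Matrix.toEuclideanLin (M : Matrix (Fin 2) (Fin 2) ℝ) v

variable {𝒜 : Type*}

/-- The shift by `k` on two-sided sequences; `shift 1` is the left shift `T`. -/
def shift (k : ℤ) (ω : ℤ → 𝒜) : ℤ → 𝒜 := fun n => ω (n + k)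

/-- `Ω ⊆ 𝒜^ℤ` is a subshift: nonempty, closed, invariant under the shift and its inverse. -/
structure IsSubshift [TopologicalSpace 𝒜] (Ω : Set (ℤ → 𝒜)) : Prop where
  nonempty : Ω.Nonempty
  closed : IsClosed Ω
  shift_mem : ∀ ω ∈ Ω, shift 1 ω ∈ Ω
  shift_neg_mem : ∀ ω ∈ Ω, shift (-1) ω ∈ Ω

/-- The word `ω(k) ω(k+1) ⋯ ω(k+n-1)`. -/
def word (ω : ℤ → 𝒜) (k : ℤ) (n : ℕ) : List 𝒜 := (List.range n).map fun i => ω (k + i)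

/-- `v` occurs in `ω` at position `k`. -/
def occursAt (v : List 𝒜) (ω : ℤ → 𝒜) (k : ℤ) : Prop := v = word ω k v.length

/-- The words of length `n` occurring in elements of `Ω`. -/
def WordsN (Ω : Set (ℤ → 𝒜)) (n : ℕ) : Set (List 𝒜) :=
  {v | ∃ ω ∈ Ω, ∃ k : ℤ, v = word ω k n}

/-- The (nonempty) finite words occurring in elements of `Ω`. -/
def Words (Ω : Set (ℤ → 𝒜)) : Set (List 𝒜) :=
  {v | 1 ≤ v.length ∧ v ∈ WordsN Ω v.length}

/-- `A` is locally constant on `Ω`: its value depends only on a finite window around 0. -/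
def LocConstOn (Ω : Set (ℤ → 𝒜)) {β : Type*} (A : (ℤ → 𝒜) → β) : Prop :=
  ∃ N : ℕ, ∀ ω ∈ Ω, ∀ ρ ∈ Ω, (∀ i : ℤ, |i| ≤ (N : ℤ) → ω i = ρ i) → A ω = A ρ

/-- The positive part of the cocycle: `cocycleP A n ω = A(T^{n-1}ω) ⋯ A(ω)`. -/
def cocycleP (A : (ℤ → 𝒜) → SL2) : ℕ → (ℤ → 𝒜) → SL2
  | 0, _ => 1
  | n + 1, ω => A (shift n ω) * cocycleP A n ω

/-- The full cocycle over the shift, `n ∈ ℤ`. -/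
def cocycle (A : (ℤ → 𝒜) → SL2) (n : ℤ) (ω : ℤ → 𝒜) : SL2 :=
  if 0 ≤ n then cocycleP A n.toNat ω else (cocycleP A (-n).toNat (shift n ω))⁻¹

/-- `A` is uniform on `Ω`: `(1/n) log‖A(n,ω)‖` converges uniformly on `Ω`. -/
def IsUniform (Ω : Set (ℤ → 𝒜)) (A : (ℤ → 𝒜) → SL2) : Prop :=
  ∃ Λ : ℝ, TendstoUniformlyOn
    (fun (n : ℕ) (ω : ℤ → 𝒜) => Real.log (slNorm (cocycle A n ω)) / n)
    (fun _ => Λ) atTop Ω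

/-- The number of occurrences of `v` in `ω(1)⋯ω(n)`. -/
def occCount (v : List 𝒜) (ω : ℤ → 𝒜) (n : ℕ) : ℕ :=
  Set.ncard {k : ℤ | 1 ≤ k ∧ k + v.length ≤ (n : ℤ) + 1 ∧ occursAt v ω k}

/-- Uniform existence of word frequencies (unique ergodicity). -/
def UniformWordFreq (Ω : Set (ℤ → 𝒜)) : Prop :=
  ∀ v ∈ Words Ω, ∃ ν : ℝ, TendstoUniformlyOn
    (fun (n : ℕ) (ω : ℤ → 𝒜) => (occCount v ω n : ℝ) / n) (fun _ => ν) atTop Ω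

/-- Minimality: every orbit is dense in `Ω`. -/
def IsMinimalSubshift [TopologicalSpace 𝒜] (Ω : Set (ℤ → 𝒜)) : Prop :=
  ∀ ω ∈ Ω, ∀ ρ ∈ Ω, ρ ∈ closure {σ : ℤ → 𝒜 | ∃ k : ℤ, σ = shift k ω}

/-- Condition (α): for all large `n`, the words of length `n` of `Ω` are exactly the
words `lead j (-k+1) ⋯ lead j (-k+n)`, `0 ≤ k ≤ n`, of the leading words. -/
def CondAlpha (Ω : Set (ℤ → 𝒜)) {r : ℕ} (lead : Fin r → (ℤ → 𝒜)) : Prop :=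
  (∀ j, lead j ∈ Ω) ∧ ∃ N : ℕ, ∀ n : ℕ, N ≤ n →
    WordsN Ω n = {v | ∃ j : Fin r, ∃ k : ℕ, k ≤ n ∧ v = word (lead j) (1 - (k : ℤ)) n}

/-- Condition (β): for every locally constant cocycle the Lyapunov limits along the
leading words exist in both time directions and all have the same value. -/
def CondBeta (Ω : Set (ℤ → 𝒜)) {r : ℕ} (lead : Fin r → (ℤ → 𝒜)) : Prop :=
  ∀ A : (ℤ → 𝒜) → SL2, LocConstOn Ω A → ∃ Λ : ℝ, ∀ j : Fin r,
    Tendsto (fun n : ℕ => Real.log (slNorm (cocycle A n (lead j))) / n) atTop (𝓝 Λ) ∧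
    Tendsto (fun n : ℕ => Real.log (slNorm (cocycle A (-(n : ℤ)) (lead j))) / n) atTop (𝓝 Λ)

/-- Condition (γ): along the leading words, for every locally constant cocycle and every
nonzero vector, at most one of the two one-sided exponents is negative. -/
def CondGamma (Ω : Set (ℤ → 𝒜)) {r : ℕ} (lead : Fin r → (ℤ → 𝒜)) : Prop :=
  ∀ A : (ℤ → 𝒜) → SL2, LocConstOn Ω A → ∀ j : Fin r,
    ∀ v : EuclideanSpace ℝ (Fin 2), v ≠ 0 →
    ¬ (limsup (fun n : ℕ => Real.log ‖slAct (cocycle A n (lead j)) v‖ / n) atTop < 0 ∧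
       limsup (fun n : ℕ => Real.log ‖slAct (cocycle A (-(n : ℤ)) (lead j)) v‖ / n) atTop < 0)

/-- The leading sequence condition (LSC). -/
def SatisfiesLSC (Ω : Set (ℤ → 𝒜)) : Prop :=
  ∃ (r : ℕ) (lead : Fin r → (ℤ → 𝒜)), CondAlpha Ω lead ∧ CondBeta Ω lead ∧ CondGamma Ω lead

/-- `F` is subadditive on the words of `Ω`. -/
def SubadditiveOn (Ω : Set (ℤ → 𝒜)) (F : List 𝒜 → ℝ) : Prop :=
  ∀ x y : List 𝒜, x ∈ Words Ω → y ∈ Words Ω → (x ++ y) ∈ Words Ω → F (x ++ y) ≤ F x + F y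

/-- `Fb` is the asymptotic mean `lim_n max { F x / n : x ∈ W(Ω)_n }` of `F`. -/
def IsAsympMean (Ω : Set (ℤ → 𝒜)) (F : List 𝒜 → ℝ) (Fb : ℝ) : Prop :=
  Tendsto (fun n : ℕ => sSup ((fun x => F x / n) '' WordsN Ω n)) atTop (𝓝 Fb)

/-- Maximal number of pairwise disjoint occurrences of `v` in `ω(1)⋯ω(n)`. -/
def disjCount (v : List 𝒜) (ω : ℤ → 𝒜) (n : ℕ) : ℕ :=
  sSup {m : ℕ | ∃ S : Finset ℤ, S.card = m ∧
    (∀ k ∈ S, 1 ≤ k ∧ k + v.length ≤ (n : ℤ) + 1 ∧ occursAt v ω k) ∧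
    (∀ k ∈ S, ∀ l ∈ S, k ≠ l → (v.length : ℤ) ≤ |k - l|)}

/-- Condition (PQ) for the one-sided word `p(1)p(2)⋯`. -/
def CondPQ (p : ℤ → 𝒜) : Prop :=
  ∃ c : ℝ, 0 < c ∧ ∀ m : ℕ, 1 ≤ m →
    c ≤ liminf (fun n : ℕ => (m : ℝ) / n * disjCount (word p 1 m) p n) atTop

/-- ℓ²(ℤ) over the reals. -/
abbrev Ell2Z : Type := lp (fun _ : ℤ => ℝ) 2

/-- `H` acts as the Jacobi operator with coefficients `f, g` at `ω`. -/
def IsJacobiAt (f g : (ℤ → 𝒜) → ℝ) (ω : ℤ → 𝒜) (H : Ell2Z →L[ℝ] Ell2Z) : Prop :=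
  ∀ u : Ell2Z, ∀ n : ℤ,
    (H u : ∀ _ : ℤ, ℝ) n =
      f (shift n ω) * (u : ∀ _ : ℤ, ℝ) (n - 1) + f (shift (n + 1) ω) * (u : ∀ _ : ℤ, ℝ) (n + 1)
        + g (shift n ω) * (u : ∀ _ : ℤ, ℝ) n

/-- The pair `(f,g)` is periodic on `Ω`. -/
def PeriodicPair (Ω : Set (ℤ → 𝒜)) (f g : (ℤ → 𝒜) → ℝ) : Prop :=
  ∃ P : ℕ, 1 ≤ P ∧ ∀ ω ∈ Ω, f (shift (P : ℤ) ω) = f ω ∧ g (shift (P : ℤ) ω) = g ω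

/-- `S ⊆ ℝ` is a Cantor set of Lebesgue measure zero: compact, empty interior,
no isolated points, Lebesgue measure zero. -/
def IsMeasureZeroCantor (S : Set ℝ) : Prop :=
  IsCompact S ∧ interior S = ∅ ∧ Perfect S ∧ volume S = 0

/-- `n` copies of `x` separated by `n-1` copies of the letter `l`. -/
def sepJoin (x : List 𝒜) (l : 𝒜) (m : ℕ) : List 𝒜 :=
  (List.replicate (m - 1) (x ++ [l])).flatten ++ x

/-- `Blk a nseq (k+1)` is the block `block(k)` of the simple Toeplitz construction
(with `Blk a nseq 0 = block(-1) = ε`). -/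
def Blk (a : ℕ → 𝒜) (nseq : ℕ → ℕ) : ℕ → List 𝒜
  | 0 => []
  | k + 1 => sepJoin (Blk a nseq k) (a k) (nseq k)

/-- `p(1)p(2)⋯` is the one-sided word `block(∞)`: every block is a prefix of it. -/
def IsBlockInf (a : ℕ → 𝒜) (nseq : ℕ → ℕ) (p : ℤ → 𝒜) : Prop :=
  ∀ k : ℕ, word p 1 (Blk a nseq k).length = Blk a nseq k

/-- The simple Toeplitz subshift generated by `block(∞) = p(1)p(2)⋯`: all two-sided
sequences whose finite subwords all occur in `block(∞)`. -/
def toeplitzΩ (p : ℤ → 𝒜) : Set (ℤ → 𝒜) :=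
  {ω | ∀ (i : ℤ) (n : ℕ), ∃ l : ℤ, 1 ≤ l ∧ word ω i n = word p l n}

/-- The eventual alphabet: letters occurring infinitely often in `(a_k)`. -/
def EvAlph (a : ℕ → 𝒜) : Set 𝒜 := {x | ∀ K : ℕ, ∃ k, K ≤ k ∧ a k = x}

/-- The leading word `p^R v | p`: equals `p(n+1)` for `n ≥ 0`, carries the word `v` on
positions `-|v|, …, -1`, and equals `p(-(n+|v|))` for `n < -|v|`. -/
def leadWordGen (p : ℤ → 𝒜) (v : List 𝒜) : ℤ → 𝒜 := fun n =>
  if 0 ≤ n then p (n + 1)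
  else if -(v.length : ℤ) ≤ n then v.getD (n + v.length).toNat (p 1)
  else p (-(n + v.length))

/-- The Gauss map. -/
def gaussMap (x : ℝ) : ℝ := 1 / x - ⌊1 / x⌋

/-- `cfSeq α n` is the continued fraction coefficient `a_{n+1}` of `α`. -/
def cfSeq (α : ℝ) (n : ℕ) : ℕ := ⌊1 / (gaussMap^[n] α)⌋₊

/-- The standard Sturmian words: `sturmW α (n+1) = s_n`, `sturmW α 0 = s_{-1} = 1`,
`sturmW α 1 = s_0 = 0`, `s_1 = s_0^{a_1 - 1} s_{-1}`, `s_n = s_{n-1}^{a_n} s_{n-2}`. -/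
def sturmW (α : ℝ) : ℕ → List (Fin 2)
  | 0 => [1]
  | 1 => [0]
  | 2 => List.replicate (cfSeq α 0 - 1) (0 : Fin 2) ++ [1]
  | n + 3 => (List.replicate (cfSeq α (n + 1)) (sturmW α (n + 2))).flatten ++ sturmW α (n + 1)

/-- The Sturmian subshift with rotation number `α`: all two-sided sequences whose finite
subwords occur in some `s_n`. -/
def sturmΩ (α : ℝ) : Set (ℤ → Fin 2) :=
  {ω | ∀ (i : ℤ) (n : ℕ), ∃ m : ℕ, word ω i n <:+: sturmW α m}

/-- The positive cocycle of a map `A` over a transformation `T`: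
`cocycleH T A n ω = A(T^{n-1}ω) ⋯ A(ω)`. -/
def cocycleH {Ω : Type*} (T : Ω → Ω) (A : Ω → SL2) : ℕ → Ω → SL2
  | 0, _ => 1
  | n + 1, ω => A (T^[n] ω) * cocycleH T A n ω

end
namespace Toep

abbrev E2 := EuclideanSpace ℝ (Fin 2)

def cr (u v : E2) : ℝ := u 0 * v 1 - u 1 * v 0

lemma act_apply0 (g : SL2) (v : E2) : slAct g v 0 = g.1 0 0 * v 0 + g.1 0 1 * v 1 := by
  simp [slAct, Matrix.toEuclideanLin, Matrix.toLpLin_apply]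

lemma act_apply1 (g : SL2) (v : E2) : slAct g v 1 = g.1 1 0 * v 0 + g.1 1 1 * v 1 := by
  simp [slAct, Matrix.toEuclideanLin, Matrix.toLpLin_apply]

lemma act_mul (g h : SL2) (v : E2) : slAct (g * h) v = slAct g (slAct h v) := by
  ext i
  fin_cases i
  · simp [act_apply0, act_apply1, Matrix.mul_apply, Fin.sum_univ_two]; ring
  · simp [act_apply0, act_apply1, Matrix.mul_apply, Fin.sum_univ_two]; ring

lemma act_one (v : E2) : slAct 1 v = v := by
  ext i
  fin_cases i <;> simp [act_apply0, act_apply1]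

lemma act_smul (g : SL2) (c : ℝ) (v : E2) : slAct g (c • v) = c • slAct g v := by
  simp [slAct]

lemma act_add (g : SL2) (v w : E2) : slAct g (v + w) = slAct g v + slAct g w := by
  simp [slAct]

lemma act_cont (g : SL2) : Continuous (slAct g) := by
  unfold slAct
  exact LinearMap.continuous_of_finiteDimensional _

lemma det_eq (g : SL2) : g.1 0 0 * g.1 1 1 - g.1 0 1 * g.1 1 0 = 1 := by
  have := g.2
  rwa [Matrix.det_fin_two] at this

lemma cr_act (g : SL2) (u v : E2) : cr (slAct g u) (slAct g v) = cr u v := by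
  have := det_eq g
  simp only [cr, act_apply0, act_apply1]
  linear_combination (u 0 * v 1 - u 1 * v 0) * this

lemma nsq (u : E2) : ‖u‖ ^ 2 = u 0 ^ 2 + u 1 ^ 2 := by
  rw [EuclideanSpace.norm_sq_eq]; simp

lemma cr_le (u v : E2) : |cr u v| ≤ ‖u‖ * ‖v‖ := by
  apply abs_le_of_sq_le_sq _ (by positivity)
  rw [mul_pow, nsq, nsq, cr]
  nlinarith [sq_nonneg (u 0 * v 0 + u 1 * v 1)]

def inn (u v : E2) : ℝ := u 0 * v 0 + u 1 * v 1

lemma inn_le (u v : E2) : |inn u v| ≤ ‖u‖ * ‖v‖ := by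
  apply abs_le_of_sq_le_sq _ (by positivity)
  rw [mul_pow, nsq, nsq, inn]
  nlinarith [sq_nonneg (u 0 * v 1 - u 1 * v 0)]

def J (u : E2) : E2 := !₂[-u 1, u 0]

lemma J_norm (u : E2) : ‖J u‖ = ‖u‖ := by
  have : ‖J u‖ ^ 2 = ‖u‖ ^ 2 := by
    rw [nsq, nsq]; simp [J]; ring
  exact (pow_left_inj₀ (norm_nonneg _) (norm_nonneg _) two_ne_zero).1 this

lemma cr_J (u : E2) : cr u (J u) = ‖u‖ ^ 2 := by
  rw [nsq]; simp [J, cr]; ring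

lemma decomp (u v : E2) (hu : ‖u‖ = 1) : v = inn u v • u + cr u v • J u := by
  have h := nsq u
  rw [hu] at h
  ext i
  fin_cases i
  · simp [inn, cr, J]; linear_combination (v 0) * h
  · simp [inn, cr, J]; linear_combination (v 1) * h

lemma cr_tri (u v w : E2) (hu : ‖u‖ = 1) (hv : ‖v‖ = 1) (hw : ‖w‖ = 1) :
    |cr u w| ≤ |cr u v| + |cr v w| := by
  have h := nsq v
  rw [hv] at h
  have e : cr u w = cr u v * inn v w + inn u v * cr v w := by
    simp only [cr, inn]
    linear_combination (u 0 * w 1 - u 1 * w 0) * h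
  have h1 := inn_le v w
  have h2 := inn_le u v
  rw [hu, hv] at h2
  rw [hv, hw] at h1
  rw [e]
  refine (abs_add_le _ _).trans ?_
  rw [abs_mul, abs_mul]
  nlinarith [abs_nonneg (cr u v), abs_nonneg (cr v w)]

lemma N_act (g : SL2) (v : E2) : ‖slAct g v‖ ≤ slNorm g * ‖v‖ := by
  have := (LinearMap.toContinuousLinearMap (Matrix.toEuclideanLin g.1)).le_opNorm v
  exact this

lemma N_le (g : SL2) (c : ℝ) (hc : 0 ≤ c) (h : ∀ v, ‖slAct g v‖ ≤ c * ‖v‖) : slNorm g ≤ c :=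
  ContinuousLinearMap.opNorm_le_bound _ hc h

lemma N_nonneg (g : SL2) : 0 ≤ slNorm g := norm_nonneg _

lemma N_mul (g h : SL2) : slNorm (g * h) ≤ slNorm g * slNorm h := by
  apply N_le _ _ (mul_nonneg (N_nonneg _) (N_nonneg _))
  intro v
  rw [act_mul, mul_assoc]
  exact (N_act _ _).trans (mul_le_mul_of_nonneg_left (N_act _ _) (N_nonneg _))

lemma N_inv_le (g : SL2) : slNorm g⁻¹ ≤ slNorm g := by
  apply N_le _ _ (N_nonneg _)
  intro v
  set y := slAct g⁻¹ v with hy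
  have hv : slAct g y = v := by rw [hy, ← act_mul]; simp [act_one]
  have h1 : ‖y‖ ^ 2 = cr v (slAct g (J y)) := by
    rw [← cr_J, ← cr_act g, hv]
  have h2 := cr_le v (slAct g (J y))
  have h3 := N_act g (J y)
  rw [J_norm] at h3
  have h4 : ‖y‖ ^ 2 ≤ ‖v‖ * (slNorm g * ‖y‖) := by
    rw [h1]
    exact (le_abs_self _).trans (h2.trans (mul_le_mul_of_nonneg_left h3 (norm_nonneg _)))
  rcases (norm_nonneg y).eq_or_lt with h | h
  · rw [← h]; exact mul_nonneg (N_nonneg _) (norm_nonneg _)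
  · have : ‖y‖ * ‖y‖ ≤ (slNorm g * ‖v‖) * ‖y‖ := by nlinarith
    exact le_of_mul_le_mul_right this h

lemma N_inv (g : SL2) : slNorm g⁻¹ = slNorm g :=
  le_antisymm (N_inv_le g) (by simpa using N_inv_le g⁻¹)

def e0 : E2 := !₂[1, 0]
lemma e0_norm : ‖e0‖ = 1 := by
  have : ‖e0‖ ^ 2 = 1 := by rw [nsq]; simp [e0]
  have h := norm_nonneg e0
  nlinarith

lemma N_one_le (g : SL2) : 1 ≤ slNorm g := by
  have h1 := N_act g⁻¹ (slAct g e0)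
  rw [← act_mul, inv_mul_cancel, act_one, e0_norm, N_inv] at h1
  have h2 := N_act g e0
  rw [e0_norm] at h2
  have := N_nonneg g
  nlinarith

noncomputable def lam (g : SL2) : ℝ := Real.log (slNorm g)

lemma lam_nonneg (g : SL2) : 0 ≤ lam g := Real.log_nonneg (N_one_le g)
lemma N_pos (g : SL2) : 0 < slNorm g := lt_of_lt_of_le one_pos (N_one_le g)
lemma lam_mul (g h : SL2) : lam (g * h) ≤ lam g + lam h := by
  unfold lam
  rw [← Real.log_mul (N_pos g).ne' (N_pos h).ne']
  exact Real.log_le_log (N_pos _) (N_mul _ _)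
lemma lam_inv (g : SL2) : lam g⁻¹ = lam g := by unfold lam; rw [N_inv]
lemma N_exp (g : SL2) : slNorm g = Real.exp (lam g) := (Real.exp_log (N_pos g)).symm
lemma lam_one : lam 1 = 0 := by
  apply le_antisymm _ (lam_nonneg _)
  apply Real.log_nonpos (N_nonneg _)
  apply N_le _ _ zero_le_one
  intro v; simp [act_one]

/-- almost minimally expanded vector -/
lemma exists_min (g : SL2) : ∃ v : E2, ‖v‖ = 1 ∧ ‖slAct g v‖ ≤ 2 / slNorm g := by
  have hp := N_pos g
  have : ∃ u : E2, slNorm g / 2 * ‖u‖ < ‖slAct g⁻¹ u‖ := by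
    by_contra! h
    have := N_le g⁻¹ (slNorm g / 2) (by positivity) h
    rw [N_inv] at this
    linarith
  obtain ⟨u, hu⟩ := this
  set y := slAct g⁻¹ u with hy
  have hgy : slAct g y = u := by rw [hy, ← act_mul]; simp [act_one]
  have hy0 : 0 < ‖y‖ := lt_of_le_of_lt (by positivity) hu
  refine ⟨‖y‖⁻¹ • y, ?_, ?_⟩
  · rw [norm_smul, norm_inv, norm_norm, inv_mul_cancel₀ hy0.ne']
  · rw [act_smul, hgy, norm_smul, norm_inv, norm_norm, inv_mul_eq_div, div_le_div_iff₀ hy0 hp]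
    linarith

/-- Cayley-Hamilton -/
def tr (g : SL2) : ℝ := g.1 0 0 + g.1 1 1

lemma ch (g : SL2) (v : E2) : slAct g (slAct g v) = tr g • slAct g v - v := by
  have h := det_eq g
  ext i
  fin_cases i
  · simp [act_apply0, act_apply1, tr]; linear_combination -(v 0) * h
  · simp [act_apply0, act_apply1, tr]; linear_combination -(v 1) * h

lemma ch_inv (g : SL2) (v : E2) : tr g • v = slAct g v + slAct g⁻¹ v := by
  have h := ch g (slAct g⁻¹ v)
  have e : slAct g (slAct g⁻¹ v) = v := by rw [← act_mul]; simp [act_one]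
  rw [e] at h
  rw [h]; abel

lemma tr_le (g : SL2) : |tr g| ≤ 2 * slNorm g := by
  have h := ch_inv g e0
  have h2 : ‖tr g • e0‖ ≤ 2 * slNorm g := by
    rw [h]
    refine (norm_add_le _ _).trans ?_
    have h3 := N_act g e0
    have h4 := N_act g⁻¹ e0
    rw [e0_norm] at h3 h4
    rw [N_inv] at h4
    linarith
  rwa [norm_smul, e0_norm, mul_one, Real.norm_eq_abs] at h2

end Toep
namespace Toep

noncomputable def cs (t : ℝ) : ℕ → ℝ
  | 0 => 0
  | 1 => 1
  | n + 2 => t * cs t (n + 1) - cs t n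

lemma pow_act (Y : SL2) (n : ℕ) (v : E2) :
    slAct (Y ^ (n + 1)) v = cs (tr Y) (n + 1) • slAct Y v - cs (tr Y) n • v := by
  induction n with
  | zero => simp [cs]
  | succ n ih =>
    rw [pow_succ', act_mul, ih]
    have : slAct Y (cs (tr Y) (n + 1) • slAct Y v - cs (tr Y) n • v)
        = cs (tr Y) (n + 1) • slAct Y (slAct Y v) - cs (tr Y) n • slAct Y v := by
      simp [slAct]
    rw [this, ch]
    simp only [cs]
    module

lemma exists_z (t : ℝ) : ∃ z : ℂ, z ≠ 0 ∧ 1 ≤ ‖z‖ ∧ (t : ℂ) = z + z⁻¹ := by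
  obtain ⟨s, hs⟩ := IsAlgClosed.exists_pow_nat_eq ((t : ℂ) ^ 2 - 4) (n := 2) (by norm_num)
  set z : ℂ := (t + s) / 2 with hz
  have hq : z * (t - z) = 1 := by
    rw [hz]; linear_combination (-1 / 4 : ℂ) * hs
  have hz0 : z ≠ 0 := by
    rintro h; rw [h] at hq; simp at hq
  have hi : z⁻¹ = t - z := inv_eq_of_mul_eq_one_right hq
  rcases le_total 1 ‖z‖ with h | h
  · exact ⟨z, hz0, h, by rw [hi]; ring⟩
  · refine ⟨z⁻¹, inv_ne_zero hz0, ?_, ?_⟩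
    · rw [norm_inv]; exact (one_le_inv₀ (norm_pos_iff.2 hz0)).2 h
    · rw [inv_inv, hi]; ring

lemma cs_rec (t : ℝ) (z : ℂ) (hz : z ≠ 0) (h : (t : ℂ) = z + z⁻¹) (n : ℕ) :
    (cs t (n + 1) : ℂ) = z * cs t n + z⁻¹ ^ n := by
  induction n with
  | zero => simp [cs]
  | succ n ih =>
    have : (cs t (n + 2) : ℂ) = t * cs t (n + 1) - cs t n := by simp [cs]
    rw [this, h, add_mul, ih, pow_succ]
    field_simp
    ring

lemma cs_bound (t : ℝ) (z : ℂ) (hz : z ≠ 0) (h1 : 1 ≤ ‖z‖) (h : (t : ℂ) = z + z⁻¹) (n : ℕ) :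
    |cs t (n + 1)| ≤ (n + 1) * ‖z‖ ^ n := by
  induction n with
  | zero => simp [cs]
  | succ n ih =>
    have e := cs_rec t z hz h (n + 1)
    have : |cs t (n + 1 + 1)| = ‖(cs t (n + 1 + 1) : ℂ)‖ := by simp
    rw [this, e]
    refine (norm_add_le _ _).trans ?_
    rw [norm_mul, norm_pow, norm_inv, Complex.norm_real, Real.norm_eq_abs]
    have h2 : ‖z‖⁻¹ ^ (n + 1) ≤ 1 := pow_le_one₀ (by positivity) (inv_le_one_of_one_le₀ h1)
    have h3 : 1 ≤ ‖z‖ ^ (n + 1) := one_le_pow₀ h1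
    have h4 := mul_le_mul_of_nonneg_left ih (norm_nonneg z)
    push_cast
    have : ‖z‖ * (((n : ℝ) + 1) * ‖z‖ ^ n) = (n + 1) * ‖z‖ ^ (n + 1) := by ring
    rw [this] at h4
    linarith

lemma tr_rec (Y : SL2) (j : ℕ) : tr (Y ^ (j + 2)) = tr Y * tr (Y ^ (j + 1)) - tr (Y ^ j) := by
  have h := det_eq Y
  rw [pow_succ' Y (j + 1), pow_succ' Y j]
  generalize Y ^ j = B
  simp [tr, Matrix.mul_apply, Fin.sum_univ_two]
  linear_combination -(B.1 0 0 + B.1 1 1) * h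

lemma tr_pow (Y : SL2) (z : ℂ) (hz : z ≠ 0) (h : (tr Y : ℂ) = z + z⁻¹) (j : ℕ) :
    (tr (Y ^ j) : ℂ) = z ^ j + z⁻¹ ^ j ∧ (tr (Y ^ (j + 1)) : ℂ) = z ^ (j + 1) + z⁻¹ ^ (j + 1) := by
  induction j with
  | zero => simp [h]; simp [tr]
  | succ j ih =>
    refine ⟨ih.2, ?_⟩
    rw [tr_rec]
    push_cast
    rw [ih.1, ih.2, h]
    have hw : z * z⁻¹ = 1 := mul_inv_cancel₀ hz
    linear_combination (z ^ j + z⁻¹ ^ j) * hw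

lemma spectral (Y : SL2) : ∃ σ : ℝ, 0 ≤ σ ∧ (∀ j : ℕ, j * σ - 2 ≤ lam (Y ^ j)) ∧
    (∀ n : ℕ, lam (Y ^ (n + 1)) ≤ Real.log (2 * (n + 1)) + n * σ + lam Y) := by
  obtain ⟨z, hz, h1, h⟩ := exists_z (tr Y)
  have hzp : 0 < ‖z‖ := by linarith
  refine ⟨Real.log ‖z‖, Real.log_nonneg h1, ?_, ?_⟩
  · intro j
    have e := (tr_pow Y z hz h j).1
    have b := tr_le (Y ^ j)
    have h2 : ‖z‖ ^ j ≤ |tr (Y ^ j)| + 1 := by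
      have : z ^ j = (tr (Y ^ j) : ℂ) - z⁻¹ ^ j := by rw [e]; ring
      rw [← norm_pow, this]
      refine (norm_sub_le _ _).trans ?_
      rw [Complex.norm_real, Real.norm_eq_abs, norm_pow, norm_inv]
      have h2 : ‖z‖⁻¹ ^ j ≤ 1 := pow_le_one₀ (by positivity) (inv_le_one_of_one_le₀ h1)
      linarith
    have h3 : ‖z‖ ^ j ≤ 3 * slNorm (Y ^ j) := by linarith [N_one_le (Y ^ j)]
    have h4 := Real.log_le_log (by positivity) h3
    rw [Real.log_pow, Real.log_mul (by norm_num) (N_pos _).ne'] at h4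
    have h5 : Real.log 3 ≤ 3 - 1 := Real.log_le_sub_one_of_pos (by norm_num)
    unfold lam
    linarith
  · intro n
    have hb : slNorm (Y ^ (n + 1)) ≤ 2 * (n + 1) * ‖z‖ ^ n * slNorm Y := by
      have hN := N_one_le Y
      apply N_le _ _ (by positivity)
      intro v
      rw [pow_act]
      refine (norm_sub_le _ _).trans ?_
      rw [norm_smul, norm_smul, Real.norm_eq_abs, Real.norm_eq_abs]
      have b1 := cs_bound (tr Y) z hz h1 h n
      have b2 : |cs (tr Y) n| ≤ (n + 1) * ‖z‖ ^ n := by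
        cases n with
        | zero => simp [cs]
        | succ n =>
          refine (cs_bound (tr Y) z hz h1 h n).trans ?_
          push_cast
          have : ‖z‖ ^ n ≤ ‖z‖ ^ (n + 1) := pow_le_pow_right₀ h1 (by omega)
          gcongr
          linarith
      have a1 := N_act Y v
      have a2 : ‖v‖ ≤ slNorm Y * ‖v‖ := le_mul_of_one_le_left (norm_nonneg _) hN
      have c1 := mul_le_mul b1 a1 (norm_nonneg _) (by positivity)
      have c2 := mul_le_mul b2 a2 (norm_nonneg _) (by positivity)
      linarith
    have hN := N_pos Y
    have h4 := Real.log_le_log (N_pos _) hb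
    rw [Real.log_mul (by positivity) (by positivity), Real.log_mul (by positivity) (by positivity),
      Real.log_pow] at h4
    exact h4

/-- product of `m` consecutive terms starting at `i` -/
def pr (f : ℕ → SL2) (i : ℕ) : ℕ → SL2
  | 0 => 1
  | m + 1 => f (i + m) * pr f i m

lemma pr_add (f : ℕ → SL2) (i m n : ℕ) : pr f i (m + n) = pr f (i + m) n * pr f i m := by
  induction n with
  | zero => simp [pr]
  | succ n ih => rw [← add_assoc, pr, ih, pr, mul_assoc, add_assoc]

lemma pr_one (f : ℕ → SL2) (i : ℕ) : pr f i 1 = f i := by simp [pr]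

lemma pr_succ' (f : ℕ → SL2) (i m : ℕ) : pr f i (m + 1) = pr f (i + 1) m * f i := by
  rw [add_comm, pr_add, pr_one]

lemma pr_congr {f g : ℕ → SL2} {i j m : ℕ} (h : ∀ t < m, f (i + t) = g (j + t)) :
    pr f i m = pr g j m := by
  induction m with
  | zero => rfl
  | succ m ih => rw [pr, pr, h m (by omega), ih fun t ht => h t (by omega)]

lemma pr_rev {f g : ℕ → SL2} {i j m : ℕ} (h : ∀ t < m, f (i + t) = (g (j + (m - 1 - t)))⁻¹) :
    pr f i m = (pr g j m)⁻¹ := by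
  induction m generalizing i with
  | zero => simp [pr]
  | succ m ih =>
    rw [pr_succ', pr, mul_inv_rev]
    congr 1
    · apply ih
      intro t ht
      have := h (t + 1) (by omega)
      rw [show i + 1 + t = i + (t + 1) by ring, this]
      congr 3; omega
    · simpa using h 0 (by omega)

lemma pr_lam {f : ℕ → SL2} {κ : ℝ} (h : ∀ i, lam (f i) ≤ κ) (i m : ℕ) : lam (pr f i m) ≤ m * κ := by
  induction m with
  | zero => simp [pr, lam_one]
  | succ m ih =>
    rw [pr]
    refine (lam_mul _ _).trans ?_
    push_cast
    linarith [h (i + m)]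

lemma lam_of_mul (g h : SL2) : lam h ≤ lam (g * h) + lam g := by
  have := lam_mul g⁻¹ (g * h)
  rw [lam_inv] at this
  simp at this
  linarith

lemma lam_of_mul' (g h : SL2) : lam g ≤ lam (g * h) + lam h := by
  have := lam_mul (g * h) h⁻¹
  rw [lam_inv] at this
  simp at this
  linarith

end Toep
namespace Toep

lemma stable (f : ℕ → SL2) (κ : ℝ) (hκ : ∀ i, lam (f i) ≤ κ) (Λ ε C : ℝ) (hε : 0 < ε)
    (hεΛ : ε < Λ) (lo : ∀ m : ℕ, (Λ - ε) * m - C ≤ lam (pr f 1 m))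
    (hi : ∀ m : ℕ, lam (pr f 1 m) ≤ (Λ + ε) * m + C) :
    ∃ v : E2, ‖v‖ = 1 ∧ ∃ D : ℝ, 0 < D ∧
      ∀ m : ℕ, ‖slAct (pr f 1 m) v‖ ≤ D * Real.exp (-(Λ - 3 * ε) * m) := by
  choose v hv1 hv2 using fun m : ℕ => exists_min (pr f 1 m)
  have hr : 0 < Λ - ε := by linarith
  set r := Λ - ε with hrdef
  set θ := Real.exp (-(2 * r)) with hθ
  have hθ0 : 0 < θ := Real.exp_pos _
  have hθ1 : θ < 1 := by rw [hθ, Real.exp_lt_one_iff]; linarith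
  have hθm : ∀ m : ℕ, θ ^ m = Real.exp (-(2 * r) * m) := by
    intro m; rw [hθ, ← Real.exp_nat_mul]; congr 1; ring
  have hv3 : ∀ m, ‖slAct (pr f 1 m) (v m)‖ ≤ 2 * Real.exp (C - r * m) := by
    intro m
    refine (hv2 m).trans ?_
    rw [div_eq_mul_inv, N_exp, ← Real.exp_neg]
    gcongr
    linarith [lo m]
  have hv4 : ∀ m, ‖slAct (pr f 1 m) (v (m + 1))‖ ≤ Real.exp κ * (2 * Real.exp (C - r * m)) := by
    intro m
    have e : slAct (pr f 1 m) (v (m + 1)) = slAct (f (1 + m))⁻¹ (slAct (pr f 1 (m + 1)) (v (m + 1))) := by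
      rw [← act_mul, pr, inv_mul_cancel_left]
    rw [e]
    refine (N_act _ _).trans ?_
    rw [N_inv, N_exp]
    have h1 := hκ (1 + m)
    have h2 := hv3 (m + 1)
    gcongr
    refine h2.trans ?_
    push_cast
    gcongr
    linarith
  set b := 4 * Real.exp κ * Real.exp (2 * C) with hb
  have hb0 : 0 < b := by positivity
  have hcr : ∀ m, |cr (v m) (v (m + 1))| ≤ b * θ ^ m := by
    intro m
    rw [← cr_act (pr f 1 m)]
    refine (cr_le _ _).trans ?_
    refine (mul_le_mul (hv3 m) (hv4 m) (norm_nonneg _) (by positivity)).trans ?_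
    rw [hb, hθm]
    have : Real.exp (C - r * m) * Real.exp (C - r * m) = Real.exp (2 * C) * Real.exp (-(2 * r) * m) := by
      rw [← Real.exp_add, ← Real.exp_add]; congr 1; ring
    apply le_of_eq
    linear_combination 4 * Real.exp κ * this
  set B := b / (1 - θ) with hB
  have h1θ : 0 < 1 - θ := by linarith
  have hB0 : 0 < B := by positivity
  have hBb : B * (1 - θ) = b := by rw [hB]; field_simp
  have hcr2 : ∀ m d : ℕ, |cr (v m) (v (m + d))| ≤ B * θ ^ m - B * θ ^ (m + d) := by
    intro m d
    induction d with
    | zero => simp [cr, mul_comm]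
    | succ d ih =>
      refine (cr_tri _ (v (m + d)) _ (hv1 _) (hv1 _) (hv1 _)).trans ?_
      have h1 := hcr (m + d)
      rw [← hBb] at h1
      have h2 : B * θ ^ (m + (d + 1)) = B * θ ^ (m + d) * θ := by ring
      rw [h2]
      rw [add_assoc] at h1
      linarith
  set D := 2 * Real.exp C + B * Real.exp C with hD
  have key : ∀ m M : ℕ, m ≤ M → ‖slAct (pr f 1 m) (v M)‖ ≤ D * Real.exp (-(Λ - 3 * ε) * m) := by
    intro m M hmM
    obtain ⟨d, rfl⟩ := Nat.exists_eq_add_of_le hmM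
    rw [decomp (v m) (v (m + d)) (hv1 m), act_add, act_smul, act_smul]
    refine (norm_add_le _ _).trans ?_
    rw [norm_smul, norm_smul, Real.norm_eq_abs, Real.norm_eq_abs]
    have i1 := inn_le (v m) (v (m + d))
    rw [hv1, hv1] at i1
    have i2 : |cr (v m) (v (m + d))| ≤ B * θ ^ m := by
      refine (hcr2 m d).trans ?_
      have : 0 < B * θ ^ (m + d) := by positivity
      linarith
    have i3 := N_act (pr f 1 m) (J (v m))
    rw [J_norm, hv1, N_exp, mul_one] at i3
    have i4 : Real.exp (lam (pr f 1 m)) ≤ Real.exp ((Λ + ε) * m + C) := Real.exp_le_exp.2 (hi m)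
    have j1 := mul_le_mul i1 (hv3 m) (norm_nonneg _) (by norm_num)
    have j2 := mul_le_mul i2 (i3.trans i4) (norm_nonneg _) (by positivity)
    refine (add_le_add j1 j2).trans ?_
    have k1 : Real.exp (C - r * m) ≤ Real.exp C * Real.exp (-(Λ - 3 * ε) * m) := by
      rw [← Real.exp_add, Real.exp_le_exp]
      have : 0 ≤ ε * m := by positivity
      rw [hrdef]; linarith
    have k2 : θ ^ m * Real.exp ((Λ + ε) * m + C) = Real.exp C * Real.exp (-(Λ - 3 * ε) * m) := by
      rw [hθm, ← Real.exp_add, ← Real.exp_add]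
      congr 1; rw [hrdef]; ring
    rw [mul_assoc B, k2, hD]
    linarith
  obtain ⟨w, hw, φ, hφ, hlim⟩ := (isCompact_sphere (0 : E2) 1).tendsto_subseq
    (x := v) (fun m => by simp [hv1])
  refine ⟨w, by simpa using hw, D, by positivity, fun m => ?_⟩
  have hc : Tendsto (fun n => ‖slAct (pr f 1 m) (v (φ n))‖) atTop (𝓝 ‖slAct (pr f 1 m) w‖) :=
    (((act_cont (pr f 1 m)).norm).tendsto w).comp hlim
  refine le_of_tendsto hc ?_
  filter_upwards [eventually_ge_atTop m] with n hn
  exact key m _ (hn.trans (hφ.id_le n))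

end Toep
namespace Toep

def LL (n : ℕ → ℕ) : ℕ → ℕ
  | 0 => 1
  | k + 1 => n k * LL n k

def Tz {α : Type*} (a : ℕ → α) (n : ℕ → ℕ) (q : ℕ → α) : Prop :=
  ∀ k i, 1 ≤ i → LL n k ∣ i → ¬ LL n (k + 1) ∣ i → q i = a k

lemma LL_lt {n : ℕ → ℕ} (hn : ∀ k, 2 ≤ n k) (k : ℕ) : k < LL n k := by
  induction k with
  | zero => simp [LL]
  | succ k ih =>
    rw [LL]
    have := Nat.mul_le_mul_right (LL n k) (hn k)
    omega

lemma LL_pos {n : ℕ → ℕ} (hn : ∀ k, 2 ≤ n k) (k : ℕ) : 1 ≤ LL n k := by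
  have := LL_lt hn k; omega

lemma LL_dvd (n : ℕ → ℕ) {k k' : ℕ} (h : k ≤ k') : LL n k ∣ LL n k' := by
  induction k', h using Nat.le_induction with
  | base => exact dvd_rfl
  | succ m _ ih => exact ih.trans (by rw [LL]; exact dvd_mul_left _ _)

section
variable {α : Type*} {a : ℕ → α} {n : ℕ → ℕ} {q : ℕ → α}

lemma Tz.same (hq : Tz a n q) {K i i' : ℕ} (hi : 1 ≤ i) (hi' : 1 ≤ i')
    (hK : ¬ LL n K ∣ i) (h : ∀ k ≤ K, LL n k ∣ i ↔ LL n k ∣ i') : q i = q i' := by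
  classical
  have hex : ∃ k, ¬ LL n k ∣ i := ⟨K, hK⟩
  have h1 := Nat.find_spec hex
  have h2 : Nat.find hex ≤ K := Nat.find_le hK
  have h3 : ∀ m < Nat.find hex, LL n m ∣ i := fun m hm => not_not.1 (Nat.find_min hex hm)
  generalize Nat.find hex = k at h1 h2 h3
  cases k with
  | zero => simp [LL] at h1
  | succ k =>
    have h4 := h3 k (by omega)
    rw [hq k i hi h4 h1, hq k i' hi' ((h k (by omega)).1 h4) fun h5 => h1 ((h _ h2).2 h5)]

lemma Tz.per (hq : Tz a n q) {K i t : ℕ} (hi : 1 ≤ i) (hK : ¬ LL n K ∣ i) (ht : LL n K ∣ t) :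
    q (i + t) = q i := by
  symm
  refine hq.same hi (by omega) hK fun k hk => ?_
  exact (Nat.dvd_add_left ((LL_dvd n hk).trans ht)).symm

lemma Tz.refl (hq : Tz a n q) {K i t : ℕ} (hi : 1 ≤ i) (hit : i < t) (hK : ¬ LL n K ∣ i)
    (ht : LL n K ∣ t) : q (t - i) = q i := by
  symm
  refine hq.same hi (by omega) hK fun k hk => ?_
  exact (Nat.dvd_sub_iff_right hit.le ((LL_dvd n hk).trans ht)).symm

end

section
variable {X : ℕ → SL2} {n : ℕ → ℕ} {f : ℕ → SL2}

lemma Tz.map {α β : Type*} {a : ℕ → α} {n : ℕ → ℕ} {q : ℕ → α} (hq : Tz a n q) (M : α → β) :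
    Tz (fun k => M (a k)) n (fun i => M (q i)) := fun k i h1 h2 h3 => by
  show M _ = M _
  rw [hq k i h1 h2 h3]

lemma ndvd {L s : ℕ} (h1 : 1 ≤ s) (h2 : s < L) : ¬ L ∣ s := fun h => by
  have := Nat.le_of_dvd h1 h; omega

lemma Tz.pr_per (hf : Tz X n f) (k t r s : ℕ) (h : r + s < LL n k) :
    pr f (t * LL n k + r + 1) s = pr f (r + 1) s := by
  apply pr_congr
  intro u hu
  rw [show t * LL n k + r + 1 + u = (r + 1 + u) + t * LL n k by ring]
  exact hf.per (K := k) (by omega) (ndvd (by omega) (by omega)) (dvd_mul_left _ _)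

def PP (f : ℕ → SL2) (n : ℕ → ℕ) (k : ℕ) : SL2 := pr f 1 (LL n k - 1)

lemma Tz.palin (hn : ∀ k, 2 ≤ n k) (hf : Tz X n f) (k : ℕ) :
    PP (fun i => (f i)⁻¹) n k = (PP f n k)⁻¹ := by
  unfold PP
  have hL := LL_pos hn k
  apply pr_rev
  intro t ht
  congr 1
  rw [show 1 + (LL n k - 1 - 1 - t) = LL n k - (1 + t) by omega]
  exact (hf.refl (K := k) (by omega) (by omega) (ndvd (by omega) (by omega)) dvd_rfl).symm

lemma Tz.block (hn : ∀ k, 2 ≤ n k) (hf : Tz X n f) (k t : ℕ) :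
    pr f (t * LL n k + 1) (LL n k) = f ((t + 1) * LL n k) * PP f n k := by
  have hL := LL_pos hn k
  obtain ⟨ℓ, hℓ⟩ : ∃ ℓ, LL n k = ℓ + 1 := ⟨LL n k - 1, by omega⟩
  have h1 := hf.pr_per k t 0 ℓ (by omega)
  unfold PP
  have e : pr f (t * LL n k + 1) (LL n k) = pr f (t * LL n k + 1) (ℓ + 1) := by rw [← hℓ]
  rw [e, pr]
  simp only [add_zero, zero_add] at h1
  rw [h1, show LL n k - 1 = ℓ by omega, show t * LL n k + 1 + ℓ = (t + 1) * LL n k by rw [hℓ]; ring]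

lemma Tz.upper (hn : ∀ k, 2 ≤ n k) (hf : Tz X n f) (κ : ℝ) (hκ : ∀ i, lam (f i) ≤ κ) (c : ℝ)
    (k : ℕ) (hc : κ + lam (PP f n k) ≤ c * LL n k) :
    ∃ C, ∀ i m : ℕ, 1 ≤ i → lam (pr f i m) ≤ c * m + C := by
  have hκ0 : 0 ≤ κ := (lam_nonneg _).trans (hκ 0)
  have hL := LL_pos hn k
  have hc0 : 0 ≤ c := by
    have h1 : 0 ≤ c * LL n k := by linarith [lam_nonneg (PP f n k)]
    have h2 : (0 : ℝ) < LL n k := by exact_mod_cast hL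
    exact nonneg_of_mul_nonneg_left h1 h2
  have hb : ∀ j t : ℕ, lam (pr f (j * LL n k + 1) (t * LL n k)) ≤ t * (c * LL n k) := by
    intro j t
    induction t with
    | zero => simp [pr, lam_one]
    | succ t ih =>
      rw [Nat.succ_mul, pr_add, show j * LL n k + 1 + t * LL n k = (j + t) * LL n k + 1 by ring,
        hf.block hn]
      refine (lam_mul _ _).trans ?_
      have h1 := lam_mul (f ((j + t + 1) * LL n k)) (PP f n k)
      have h2 := hκ ((j + t + 1) * LL n k)
      push_cast
      linarith
  refine ⟨LL n k * (c + 2 * κ), fun i m hi => ?_⟩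
  set L := LL n k with hLdef
  obtain ⟨j, r, hr, hij⟩ : ∃ j r, r < L ∧ i = j * L + 1 + r :=
    ⟨(i - 1) / L, (i - 1) % L, Nat.mod_lt _ (by omega), by
      have := Nat.div_add_mod' (i - 1) L; omega⟩
  obtain ⟨t, s, hs, hts⟩ : ∃ t s, s < L ∧ r + m = t * L + s :=
    ⟨(r + m) / L, (r + m) % L, Nat.mod_lt _ (by omega), (Nat.div_add_mod' _ _).symm⟩
  have h1 := pr_add f (j * L + 1) r m
  rw [← hij] at h1
  have h2 := pr_add f (j * L + 1) (t * L) s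
  rw [← hts] at h2
  have h3 := lam_of_mul' (pr f i m) (pr f (j * L + 1) r)
  rw [← h1, h2] at h3
  have h4 := lam_mul (pr f (j * L + 1 + t * L) s) (pr f (j * L + 1) (t * L))
  have h5 := pr_lam hκ (j * L + 1 + t * L) s
  have h6 := pr_lam hκ (j * L + 1) r
  have h7 := hb j t
  have hr' : (r : ℝ) ≤ L := by exact_mod_cast hr.le
  have hs' : (s : ℝ) ≤ L := by exact_mod_cast hs.le
  have e : (r : ℝ) + m = t * L + s := by exact_mod_cast hts
  have h8 : (t : ℝ) * L ≤ m + L := by linarith [(Nat.cast_nonneg s : (0 : ℝ) ≤ s)]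
  have h9 := mul_le_mul_of_nonneg_left h8 hc0
  have h10 := mul_le_mul_of_nonneg_right hr' hκ0
  have h11 := mul_le_mul_of_nonneg_right hs' hκ0
  linarith

lemma Tz.X_eq (hn : ∀ k, 2 ≤ n k) (hf : Tz X n f) (k t : ℕ) (h1 : 1 ≤ t) (h2 : t < n k) :
    f (t * LL n k) = X k := by
  have hL := LL_pos hn k
  apply hf k _ (Nat.mul_pos h1 hL) (dvd_mul_left _ _)
  rw [LL]
  intro h
  exact ndvd h1 h2 (Nat.dvd_of_mul_dvd_mul_right hL h)

lemma Tz.Ypow (hn : ∀ k, 2 ≤ n k) (hf : Tz X n f) (k t : ℕ) (h2 : t < n k) :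
    pr f 1 (t * LL n k) = (X k * PP f n k) ^ t := by
  induction t with
  | zero => simp [pr]
  | succ t ih =>
    rw [Nat.succ_mul, pr_add, ih (by omega), pow_succ', add_comm 1, hf.block hn,
      hf.X_eq hn k (t + 1) (by omega) h2]

lemma Tz.Pnext (hn : ∀ k, 2 ≤ n k) (hf : Tz X n f) (k : ℕ) :
    X k * PP f n (k + 1) = (X k * PP f n k) ^ (n k) := by
  have hL := LL_pos hn k
  have hnk := hn k
  obtain ⟨m, hm⟩ : ∃ m, n k = m + 1 := ⟨n k - 1, by omega⟩
  have e : PP f n (k + 1) = PP f n k * (X k * PP f n k) ^ m := by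
    unfold PP
    rw [LL, hm, show (m + 1) * LL n k - 1 = m * LL n k + (LL n k - 1) by rw [Nat.succ_mul]; omega,
      pr_add, hf.Ypow hn k m (by omega)]
    have := hf.pr_per k m 0 (LL n k - 1) (by omega)
    rw [add_comm 1]
    simp only [add_zero, zero_add] at this
    rw [this]; rfl
  rw [e, hm, pow_succ', mul_assoc]

lemma Tz.lower (hn : ∀ k, 2 ≤ n k) (hf : Tz X n f) (κ : ℝ) (hκ : ∀ i, lam (f i) ≤ κ) (Λ ε C : ℝ)
    (hΛ : 0 ≤ Λ) (hε : 0 < ε)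
    (hlo : ∀ k, Λ * LL n k ≤ κ + lam (PP f n k))
    (hup : ∀ i m : ℕ, 1 ≤ i → lam (pr f i m) ≤ (Λ + ε) * m + C) :
    ∃ C', ∀ m : ℕ, (Λ - 6 * ε) * m - C' ≤ lam (pr f 1 m) := by
  have hκ0 : 0 ≤ κ := (lam_nonneg _).trans (hκ 0)
  have hC0 : 0 ≤ C := by simpa [pr, lam_one] using hup 1 0 le_rfl
  have hX : ∀ k, lam (X k) ≤ κ := fun k => by
    rw [← hf.X_eq hn k 1 le_rfl (by have := hn k; omega)]; exact hκ _
  -- growth of powers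
  have hY : ∀ k j : ℕ, 1 ≤ j →
      j * ((Λ - ε) * LL n k - (5 + 2 * κ + C)) ≤ lam ((X k * PP f n k) ^ j) := by
    intro k j hj
    have hnk := hn k
    obtain ⟨σ, hσ0, h1, h2⟩ := spectral (X k * PP f n k)
    obtain ⟨m, hm⟩ : ∃ m, n k = m + 1 := ⟨n k - 1, by omega⟩
    have hm1 : (1 : ℝ) ≤ m := by exact_mod_cast (by omega : 1 ≤ m)
    have h3 := h2 m
    rw [← hm, ← hf.Pnext hn] at h3
    have h4 := lam_of_mul (X k) (PP f n (k + 1))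
    have h5 := hlo (k + 1)
    have h6 := hX k
    have h7 := hup 1 (1 * LL n k) le_rfl
    rw [hf.Ypow hn k 1 (by omega), pow_one] at h7
    rw [LL, hm] at h5
    push_cast at h5 h7
    have h8 : Real.log (2 * (m + 1)) ≤ 2 * (m + 1) - 1 := Real.log_le_sub_one_of_pos (by positivity)
    have hLp : (0 : ℝ) ≤ LL n k := Nat.cast_nonneg _
    have h9 : m * ((Λ - ε) * LL n k - (3 + 2 * κ + C)) ≤ m * σ := by
      have : 0 ≤ (m - 1) * (ε * LL n k + 2 * κ + C) :=
        mul_nonneg (by linarith) (by positivity)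
      nlinarith
    have h10 : (Λ - ε) * LL n k - (3 + 2 * κ + C) ≤ σ := le_of_mul_le_mul_left h9 (by linarith)
    have hj1 : (1 : ℝ) ≤ j := by exact_mod_cast hj
    have h11 := mul_le_mul_of_nonneg_left h10 (by linarith : (0 : ℝ) ≤ j)
    have := h1 j
    linarith
  obtain ⟨k1, hk1⟩ := exists_nat_ge ((5 + 2 * κ + C) / ε)
  have hk1' : ∀ k, k1 ≤ k → 5 + 2 * κ + C ≤ ε * LL n k := by
    intro k hk
    rw [div_le_iff₀ hε] at hk1
    have : (k1 : ℝ) ≤ LL n k := by exact_mod_cast hk.trans (LL_lt hn k).le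
    nlinarith
  have main : ∀ k, k1 ≤ k → ∀ m, LL n k ≤ m → m < LL n (k + 1) →
      (Λ - 6 * ε) * m - (κ + C) ≤ lam (pr f 1 m) := by
    intro k hk m hm1 hm2
    have hL := LL_pos hn k
    obtain ⟨j, r, hr, hjr⟩ : ∃ j r, r < LL n k ∧ m = j * LL n k + r :=
      ⟨m / LL n k, m % LL n k, Nat.mod_lt _ (by omega), (Nat.div_add_mod' _ _).symm⟩
    have hj1 : 1 ≤ j := by
      by_contra h
      have : j = 0 := by omega
      rw [this] at hjr; omega
    have hj2 : j < n k := by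
      rw [LL] at hm2
      by_contra! h
      have := Nat.mul_le_mul_right (LL n k) h
      omega
    have e1 : pr f 1 m = pr f 1 r * (X k * PP f n k) ^ j := by
      rw [hjr, pr_add, hf.Ypow hn k j hj2]
      have := hf.pr_per k j 0 r (by omega)
      rw [add_comm 1]
      simp only [add_zero, zero_add] at this
      rw [this]
    have e2 : PP f n k = pr f (1 + r) (LL n k - 1 - r) * pr f 1 r := by
      rw [← pr_add]; unfold PP; congr 1; omega
    have e3 : (X k * PP f n k) ^ (j + 1) = (X k * pr f (1 + r) (LL n k - 1 - r)) * pr f 1 m := by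
      rw [e1, pow_succ']
      conv_lhs => enter [1]; rw [e2]
      simp only [mul_assoc]
    have h1 := hY k (j + 1) (by omega)
    rw [e3] at h1
    have h2 := lam_mul (X k * pr f (1 + r) (LL n k - 1 - r)) (pr f 1 m)
    have h3 := lam_mul (X k) (pr f (1 + r) (LL n k - 1 - r))
    have h4 := hX k
    have h5 := hup (1 + r) (LL n k - 1 - r) (by omega)
    have c1 : ((LL n k - 1 - r : ℕ) : ℝ) ≤ LL n k - r := by
      have : ((LL n k - 1 - r : ℕ) : ℝ) + r ≤ LL n k := by exact_mod_cast (by omega)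
      linarith
    have c2 : (m : ℝ) = j * LL n k + r := by exact_mod_cast hjr
    have c3 : (LL n k : ℝ) ≤ m := by exact_mod_cast hm1
    have c4 : (0 : ℝ) ≤ r := Nat.cast_nonneg r
    have h6 := mul_le_mul_of_nonneg_left c1 (by linarith : 0 ≤ Λ + ε)
    have h7 := hk1' k hk
    have h8 : ((j : ℝ) + 1) * ((Λ - 2 * ε) * LL n k) ≤ (j + 1) * ((Λ - ε) * LL n k - (5 + 2 * κ + C)) := by
      apply mul_le_mul_of_nonneg_left _ (by positivity)
      linarith
    push_cast at h1
    have h9 : (Λ - 2 * ε) * ((j + 1) * LL n k) - (Λ + ε) * (LL n k - r) - κ - C ≤ lam (pr f 1 m) := by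
      linarith
    have h10 : ((j : ℝ) + 1) * LL n k = m - r + LL n k := by rw [c2]; ring
    rw [h10] at h9
    have h11 := mul_le_mul_of_nonneg_left c3 hε.le
    have h12 := mul_nonneg hε.le c4
    have h13 : 0 ≤ ε * m := by positivity
    linarith
  refine ⟨κ + C + Λ * LL n k1, fun m => ?_⟩
  have hl1 : (0 : ℝ) ≤ Λ * LL n k1 := by positivity
  rcases lt_or_ge m (LL n k1) with h | h
  · have h1 : (m : ℝ) ≤ LL n k1 := by exact_mod_cast h.le
    have h2 := mul_le_mul_of_nonneg_left h1 hΛ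
    have h3 : 0 ≤ ε * m := by positivity
    linarith [lam_nonneg (pr f 1 m)]
  · have : ∀ K, k1 ≤ K → m < LL n K → ∃ k, k1 ≤ k ∧ LL n k ≤ m ∧ m < LL n (k + 1) := by
      intro K hK
      induction K, hK using Nat.le_induction with
      | base => intro h'; omega
      | succ K hK ih =>
        intro h'
        rcases lt_or_ge m (LL n K) with h'' | h''
        · exact ih h''
        · exact ⟨K, hK, h'', h'⟩
    obtain ⟨k, a1, a2, a3⟩ := this (max k1 m) (le_max_left _ _)
      ((le_max_right _ _).trans_lt (LL_lt hn _))
    linarith [main k a1 m a2 a3]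

end

end Toep
namespace Toep

section
variable {X : ℕ → SL2} {n : ℕ → ℕ} {f : ℕ → SL2}

lemma decay (D δ η : ℝ) (hδ : 0 < δ) (hη : 0 < η) :
    ∃ m0 : ℕ, ∀ m ≥ m0, D * Real.exp (-δ * m) ≤ η := by
  have h1 : Tendsto (fun m : ℕ => D * Real.exp (-δ * m)) atTop (𝓝 (D * 0)) := by
    apply Tendsto.const_mul
    have := Real.tendsto_exp_neg_atTop_nhds_zero.comp
      (tendsto_natCast_atTop_atTop.const_mul_atTop hδ (β := ℕ) (α := ℝ))
    refine this.congr fun m => ?_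
    simp
  rw [mul_zero] at h1
  exact eventually_atTop.1 (h1.eventually_le_const hη)

lemma Tz.gamma (hn : ∀ k, 2 ≤ n k) (hf : Tz X n f) (hrec : ∀ k K, ∃ k', K ≤ k' ∧ X k' = X k)
    (u v : E2) (hu : ‖u‖ = 1) (hv : ‖v‖ = 1) (D D' δ : ℝ) (hδ : 0 < δ)
    (h1 : ∀ m : ℕ, ‖slAct (pr f 1 m) v‖ ≤ D * Real.exp (-δ * m))
    (h2 : ∀ m : ℕ, ‖slAct (pr (fun i => (f i)⁻¹) 1 m) u‖ ≤ D' * Real.exp (-δ * m)) (k : ℕ) :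
    cr (slAct (X k) u) v ≠ 0 := by
  intro h0
  set w := slAct (X k) u with hw
  have hwv : w = inn v w • v := by
    have := decomp v w hv
    have h3 : cr v w = 0 := by
      have : cr v w = - cr w v := by simp only [cr]; ring
      rw [this, h0, neg_zero]
    rwa [h3, zero_smul, add_zero] at this
  obtain ⟨m1, hm1⟩ := decay (|inn v w| * D) δ (1 / 4) hδ (by norm_num)
  obtain ⟨m2, hm2⟩ := decay (slNorm (X k) * D') δ (1 / 4) hδ (by norm_num)
  have b1 : ∀ m ≥ m1, ‖slAct (pr f 1 m) w‖ ≤ 1 / 4 := by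
    intro m hm
    rw [hwv, act_smul, norm_smul, Real.norm_eq_abs]
    refine le_trans ?_ (hm1 m hm)
    rw [mul_assoc]
    exact mul_le_mul_of_nonneg_left (h1 m) (abs_nonneg _)
  obtain ⟨k', hk', hXk⟩ := hrec k (max m1 m2 + 1)
  have hL := LL_lt hn k'
  set P := PP f n k' with hP
  have c1 : ‖slAct (P * X k) u‖ ≤ 1 / 4 := by
    rw [act_mul]; exact b1 _ (by omega)
  have c2 : ‖slAct (P * X k)⁻¹ u‖ ≤ 1 / 4 := by
    rw [mul_inv_rev, act_mul, hP, ← hf.palin hn]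
    refine (N_act _ _).trans ?_
    rw [N_inv]
    refine le_trans ?_ (hm2 (LL n k' - 1) (by omega))
    rw [mul_assoc]
    exact mul_le_mul_of_nonneg_left (h2 _) (N_nonneg _)
  have c3 : ‖slAct (P * X k) (slAct (P * X k) u)‖ ≤ 1 / 4 := by
    have e : pr f 1 (1 * LL n k' + (LL n k' - 1)) = P * X k * P := by
      rw [pr_add, hf.Ypow hn k' 1 (by have := hn k'; omega), pow_one]
      have := hf.pr_per k' 1 0 (LL n k' - 1) (by omega)
      rw [add_comm 1]
      simp only [add_zero, zero_add] at this
      rw [this, hXk, mul_assoc]; rfl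
    have := b1 (1 * LL n k' + (LL n k' - 1)) (by omega)
    rw [e, hw] at this
    rwa [← act_mul, ← mul_assoc, act_mul]
  have c4 : |tr (P * X k)| ≤ 1 / 2 := by
    have := congrArg norm (ch_inv (P * X k) u)
    rw [norm_smul, hu, mul_one, Real.norm_eq_abs] at this
    rw [this]
    refine (norm_add_le _ _).trans ?_
    linarith
  have c5 : u = tr (P * X k) • slAct (P * X k) u - slAct (P * X k) (slAct (P * X k) u) := by
    rw [ch]; abel
  have c6 := congrArg norm c5
  rw [hu] at c6
  have c7 := norm_sub_le (tr (P * X k) • slAct (P * X k) u) (slAct (P * X k) (slAct (P * X k) u))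
  rw [← c6, norm_smul, Real.norm_eq_abs] at c7
  have c8 := mul_le_mul c4 c1 (norm_nonneg _) (by norm_num)
  linarith

lemma Tz.split (hn : ∀ k, 2 ≤ n k) (hf : Tz X n f) (i m : ℕ) (hi : 1 ≤ i) (hm : 1 ≤ m) :
    ∃ k m1 m2, m = m1 + 1 + m2 ∧
      pr f i m = pr f 1 m2 * X k * (pr (fun i => (f i)⁻¹) 1 m1)⁻¹ := by
  classical
  have hex : ∃ k, ∀ s < m, ¬ LL n (k + 1) ∣ i + s := by
    refine ⟨i + m, fun s hs => ndvd (by omega) ?_⟩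
    have := LL_lt hn (i + m + 1)
    omega
  obtain ⟨k, hk1, hk2⟩ : ∃ k, (∀ s < m, ¬ LL n (k + 1) ∣ i + s) ∧ ∃ s < m, LL n k ∣ i + s := by
    refine ⟨Nat.find hex, Nat.find_spec hex, ?_⟩
    have h3 := fun k => Nat.find_min hex (m := k)
    generalize Nat.find hex = k at h3
    cases k with
    | zero => exact ⟨0, by omega, by simp [LL]⟩
    | succ k =>
      have := h3 k (by omega)
      push Not at this
      exact this
  have ht1 := Nat.find_spec hk2
  have ht2 := fun s => Nat.find_min hk2 (m := s)
  generalize Nat.find hk2 = t at ht1 ht2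
  obtain ⟨htm, htd⟩ := ht1
  refine ⟨k, t, m - 1 - t, by omega, ?_⟩
  have e : m = t + (1 + (m - 1 - t)) := by omega
  conv_lhs => rw [e]
  rw [pr_add, pr_add, pr_one, hf k (i + t) (by omega) htd (hk1 t htm)]
  congr 1
  · congr 1
    apply pr_congr
    intro s hs
    have a1 := hk1 (t + 1 + s) (by omega)
    have a2 : ¬ LL n (k + 1) ∣ 1 + s := by
      intro h
      by_cases hd : LL n k ∣ 1 + s
      · -- a multiple of `LL n (k+1)` must lie in between
        have hle := Nat.le_of_dvd (by omega) h
        set Q := LL n (k + 1) with hQ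
        have hQ1 : 1 ≤ Q := LL_pos hn _
        have hmod := Nat.mod_lt (i + t) hQ1
        have hdm := Nat.div_add_mod (i + t) Q
        have hr0 : (i + t) % Q ≠ 0 := fun h0 => hk1 t htm (Nat.dvd_of_mod_eq_zero h0)
        apply hk1 (t + (Q - (i + t) % Q)) (by omega)
        rw [show i + (t + (Q - (i + t) % Q)) = Q * ((i + t) / Q) + Q by omega]
        exact dvd_add (dvd_mul_right _ _) dvd_rfl
      · exact hd ((LL_dvd n (Nat.le_succ k)).trans h)
    have e2 : i + t + 1 + s = (1 + s) + (i + t) := by ring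
    by_cases hd : LL n k ∣ 1 + s
    · rw [hf k (1 + s) (by omega) hd a2, hf k (i + t + 1 + s) (by omega) _ _]
      · rw [e2]; exact dvd_add hd htd
      · rw [show i + t + 1 + s = i + (t + 1 + s) by ring]; exact a1
    · rw [e2]; exact hf.per (by omega) hd htd
  · apply pr_rev
    intro s hs
    rw [inv_inv]
    have hd : ¬ LL n k ∣ i + s := fun h => ht2 s hs ⟨by omega, h⟩
    rw [show 1 + (t - 1 - s) = (i + t) - (i + s) by omega]
    exact (hf.refl (by omega) (by omega) hd htd).symm

theorem Tz.core (hn : ∀ k, 2 ≤ n k) (hf : Tz X n f) (hrec : ∀ k K, ∃ k', K ≤ k' ∧ X k' = X k)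
    (hfin : (Set.range X).Finite) (κ : ℝ) (hκ : ∀ i, lam (f i) ≤ κ) :
    ∃ Λ : ℝ, ∀ ε > 0, ∃ C : ℝ, ∀ i m : ℕ, 1 ≤ i → |lam (pr f i m) - Λ * m| ≤ ε * m + C := by
  have hκ0 : 0 ≤ κ := (lam_nonneg _).trans (hκ 0)
  set s : ℕ → ℝ := fun k => (κ + lam (PP f n k)) / LL n k with hs
  have hLp : ∀ k, (0 : ℝ) < LL n k := fun k => by exact_mod_cast LL_pos hn k
  have hs0 : ∀ k, 0 ≤ s k := fun k => div_nonneg (by linarith [lam_nonneg (PP f n k)]) (hLp k).le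
  have hbdd : BddBelow (Set.range s) := ⟨0, by rintro _ ⟨k, rfl⟩; exact hs0 k⟩
  set Λ := ⨅ k, s k with hΛdef
  have hΛ0 : 0 ≤ Λ := le_ciInf hs0
  have hlo : ∀ k, Λ * LL n k ≤ κ + lam (PP f n k) := fun k => by
    have := ciInf_le hbdd k
    rwa [← hΛdef, hs, le_div_iff₀ (hLp k)] at this
  have hhi : ∀ δ > 0, ∃ k, κ + lam (PP f n k) ≤ (Λ + δ) * LL n k := fun δ hδ => by
    obtain ⟨k, hk⟩ := exists_lt_of_ciInf_lt (show ⨅ k, s k < Λ + δ by rw [← hΛdef]; linarith)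
    refine ⟨k, ?_⟩
    rw [hs, div_lt_iff₀ (hLp k)] at hk
    exact hk.le
  refine ⟨Λ, fun ε hε => ?_⟩
  obtain ⟨k0, hk0⟩ := hhi ε hε
  obtain ⟨C0, hC0⟩ := hf.upper hn κ hκ _ k0 hk0
  rcases hΛ0.eq_or_lt with h | hΛ
  · refine ⟨C0, fun i m hi => ?_⟩
    have := hC0 i m hi
    rw [← h] at this ⊢
    rw [zero_mul, sub_zero, abs_of_nonneg (lam_nonneg _)]
    linarith
  set δ := min ε Λ / 100 with hδ
  have hm0 : 0 < min ε Λ := lt_min hε hΛ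
  have hδ0 : 0 < δ := by positivity
  have hδε : 18 * δ ≤ ε := by have := min_le_left ε Λ; rw [hδ]; linarith
  have hδΛ : 18 * δ < Λ := by have := min_le_right ε Λ; rw [hδ]; linarith
  obtain ⟨k, hk⟩ := hhi δ hδ0
  have hf' : Tz (fun k => (X k)⁻¹) n (fun i => (f i)⁻¹) := hf.map (fun x => x⁻¹)
  have hκ' : ∀ i, lam ((fun i => (f i)⁻¹) i) ≤ κ := fun i => by
    show lam (f i)⁻¹ ≤ κ
    rw [lam_inv]; exact hκ i
  have hPP : ∀ k, lam (PP (fun i => (f i)⁻¹) n k) = lam (PP f n k) := fun k => by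
    rw [hf.palin hn, lam_inv]
  obtain ⟨C1, hC1⟩ := hf.upper hn κ hκ _ k hk
  obtain ⟨C2, hC2⟩ := hf'.upper hn κ hκ' (Λ + δ) k (by rw [hPP]; exact hk)
  obtain ⟨C3, hC3⟩ := hf.lower hn κ hκ Λ δ C1 hΛ0 hδ0 hlo hC1
  obtain ⟨C4, hC4⟩ := hf'.lower hn κ hκ' Λ δ C2 hΛ0 hδ0 (fun k => by rw [hPP]; exact hlo k) hC2
  obtain ⟨v, hv, D, hD, hvD⟩ := stable f κ hκ Λ (6 * δ) (max C1 C3) (by linarith) (by linarith)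
    (fun m => by linarith [hC3 m, le_max_right C1 C3])
    (fun m => by
      have : 0 ≤ δ * m := by positivity
      linarith [hC1 1 m le_rfl, le_max_left C1 C3])
  obtain ⟨u, hu, D', hD', huD⟩ := stable (fun i => (f i)⁻¹) κ hκ' Λ (6 * δ) (max C2 C4)
    (by linarith) (by linarith)
    (fun m => by linarith [hC4 m, le_max_right C2 C4])
    (fun m => by
      have : 0 ≤ δ * m := by positivity
      linarith [hC2 1 m le_rfl, le_max_left C2 C4])
  set r := Λ - 3 * (6 * δ) with hr
  have hr0 : 0 < r := by rw [hr]; linarith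
  have hg := hf.gamma hn hrec u v hu hv D D' r hr0 hvD huD
  -- uniform lower bound of the angles
  obtain ⟨d, hd0, hd⟩ : ∃ d > 0, ∀ k, d ≤ |cr (slAct (X k) u) v| := by
    obtain ⟨x, ⟨k', rfl⟩, hd⟩ := Set.exists_min_image (Set.range X)
      (fun x => |cr (slAct x u) v|) hfin (Set.range_nonempty _)
    exact ⟨_, abs_pos.2 (hg k'), fun k => hd _ ⟨k, rfl⟩⟩
  refine ⟨|C0| + r + |Real.log (D' * D)| + |Real.log d|, fun i m hi => ?_⟩
  have n1 := le_abs_self C0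
  have n2 := abs_nonneg C0
  have n3 := neg_abs_le (Real.log d)
  have n4 := le_abs_self (Real.log (D' * D))
  have n5 := abs_nonneg (Real.log d)
  have n6 := abs_nonneg (Real.log (D' * D))
  rcases Nat.eq_zero_or_pos m with rfl | hm
  · simp [pr, lam_one]; positivity
  have hup := hC0 i m hi
  obtain ⟨k', m1, m2, hmm, hW⟩ := hf.split hn i m hi hm
  have key : d ≤ Real.exp (lam (pr f i m)) * (D' * D) * Real.exp (-r * (m - 1)) := by
    refine (hd k').trans ?_
    rw [← cr_act (pr f 1 m2)]
    refine (cr_le _ _).trans ?_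
    have e : slAct (pr f 1 m2) (slAct (X k') u)
        = slAct (pr f i m) (slAct (pr (fun i => (f i)⁻¹) 1 m1) u) := by
      rw [hW, ← act_mul, ← act_mul, inv_mul_cancel_right]
    rw [e]
    have a1 := N_act (pr f i m) (slAct (pr (fun i => (f i)⁻¹) 1 m1) u)
    have a2 := mul_le_mul_of_nonneg_left (huD m1) (N_nonneg (pr f i m))
    have a3 := mul_le_mul (a1.trans a2) (hvD m2) (norm_nonneg _)
      (mul_nonneg (N_nonneg _) (by positivity))
    refine a3.trans (le_of_eq ?_)
    rw [N_exp]
    have e2 : Real.exp (-r * m1) * Real.exp (-r * m2) = Real.exp (-r * (m - 1)) := by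
      rw [← Real.exp_add]; congr 1; rw [hmm]; push_cast; ring
    rw [← e2]; ring
  have key2 := Real.log_le_log hd0 key
  rw [Real.log_mul (by positivity) (by positivity), Real.log_mul (by positivity) (by positivity),
    Real.log_exp, Real.log_exp] at key2
  have hm' : (0 : ℝ) ≤ m := Nat.cast_nonneg m
  have h3 := mul_le_mul_of_nonneg_right hδε hm'
  rw [abs_le]
  constructor
  · have : r * m = Λ * m - 18 * δ * m := by rw [hr]; ring
    linarith
  · linarith

end

end Toep
namespace Toep

section
variable {𝒜 : Type*}

lemma sepJoin_succ_length (x : List 𝒜) (l : 𝒜) (m : ℕ) :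
    (sepJoin x l (m + 1)).length + 1 = (m + 1) * (x.length + 1) := by
  induction m with
  | zero => simp [sepJoin]
  | succ m ih =>
    simp only [sepJoin, Nat.add_sub_cancel, List.replicate_succ, List.flatten_cons,
      List.length_append, List.length_singleton] at ih ⊢
    rw [Nat.succ_mul (m + 1), ← ih]
    omega

lemma sepJoin_get (x : List 𝒜) (l : 𝒜) (m i : ℕ) (hi : i + 1 < (m + 1) * (x.length + 1)) :
    (sepJoin x l (m + 1))[i]? =
      if (i + 1) % (x.length + 1) = 0 then some l else x[(i + 1) % (x.length + 1) - 1]? := by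
  induction m generalizing i with
  | zero =>
    have h1 : (i + 1) % (x.length + 1) = i + 1 := Nat.mod_eq_of_lt (by omega)
    simp [sepJoin, h1]
  | succ m ih =>
    have e : sepJoin x l (m + 1 + 1) = x ++ (l :: sepJoin x l (m + 1)) := by
      simp [sepJoin, List.replicate_succ]
    rw [e]
    rcases lt_trichotomy i x.length with h | h | h
    · have h1 : (i + 1) % (x.length + 1) = i + 1 := Nat.mod_eq_of_lt (by omega)
      rw [List.getElem?_append_left h, h1]
      simp
    · subst h
      simp
    · rw [List.getElem?_append_right h.le]
      obtain ⟨j, rfl⟩ : ∃ j, i = j + (x.length + 1) := ⟨i - (x.length + 1), by omega⟩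
      rw [show j + (x.length + 1) - x.length = j + 1 by omega, List.getElem?_cons_succ,
        ih j (by rw [Nat.succ_mul] at hi; omega)]
      rw [show j + (x.length + 1) + 1 = (j + 1) + (x.length + 1) by omega, Nat.add_mod_right]

lemma word_map (ω : ℤ → 𝒜) (k : ℤ) (m : ℕ) :
    word ω k m = (List.range m).map fun i : ℕ => ω (k + i) := by
  unfold word
  simp only [List.pure_def, List.bind_eq_flatMap]
  rw [← List.map_eq_flatMap, List.map_map]
  rfl

lemma word_get (ω : ℤ → 𝒜) (k : ℤ) (m t : ℕ) (ht : t < m) :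
    (word ω k m)[t]? = some (ω (k + t)) := by
  rw [word_map, List.getElem?_map, List.getElem?_range ht]; rfl

variable {a : ℕ → 𝒜} {nseq : ℕ → ℕ}

lemma Blk_length (hn : ∀ k, 2 ≤ nseq k) (k : ℕ) : (Blk a nseq k).length + 1 = LL nseq k := by
  induction k with
  | zero => simp [Blk, LL]
  | succ k ih =>
    obtain ⟨m, hm⟩ : ∃ m, nseq k = m + 1 := ⟨nseq k - 1, by have := hn k; omega⟩
    rw [Blk, LL, hm, sepJoin_succ_length, ih]

lemma Blk_get (hn : ∀ k, 2 ≤ nseq k) (K : ℕ) : ∀ k < K, ∀ i, 1 ≤ i → i < LL nseq K →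
    LL nseq k ∣ i → ¬ LL nseq (k + 1) ∣ i → (Blk a nseq K)[i - 1]? = some (a k) := by
  induction K with
  | zero => intro k hk; omega
  | succ K ih =>
    intro k hk i hi hiL h1 h2
    obtain ⟨m, hm⟩ : ∃ m, nseq K = m + 1 := ⟨nseq K - 1, by have := hn K; omega⟩
    have hl := Blk_length (a := a) hn K
    rw [LL, hm, ← hl] at hiL
    rw [Blk, hm, sepJoin_get _ _ _ _ (by omega), hl, show i - 1 + 1 = i by omega]
    by_cases hkK : k = K
    · subst hkK
      rw [if_pos (Nat.mod_eq_zero_of_dvd h1)]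
    · have hd1 : LL nseq (k + 1) ∣ LL nseq K := LL_dvd _ (by omega)
      have hd0 : LL nseq k ∣ LL nseq K := LL_dvd _ (by omega)
      have h3 : i % LL nseq K ≠ 0 := fun h => h2 (hd1.trans (Nat.dvd_of_mod_eq_zero h))
      rw [if_neg h3]
      apply ih k (by omega) _ (by omega) (Nat.mod_lt _ (LL_pos hn K))
      · exact (Nat.dvd_mod_iff hd0).2 h1
      · exact fun h => h2 ((Nat.dvd_mod_iff hd1).1 h)

lemma block_Tz (hn : ∀ k, 2 ≤ nseq k) {p : ℤ → 𝒜} (hp : IsBlockInf a nseq p) :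
    Tz a nseq (fun i : ℕ => p i) := by
  intro k i hi h1 h2
  set K := max (k + 1) i
  have hK := LL_lt hn K
  have hl := Blk_length (a := a) hn K
  have h3 := Blk_get (a := a) hn K k (by omega) i hi (by omega) h1 h2
  rw [← hp K, word_get _ _ _ _ (by omega)] at h3
  replace h3 := Option.some.inj h3
  show p i = a k
  rw [← h3]; congr 1; omega

lemma LL_shift (n : ℕ → ℕ) (k0 k : ℕ) : LL (fun k => n (k0 + k)) k * LL n k0 = LL n (k0 + k) := by
  induction k with
  | zero => simp [LL]
  | succ k ih => rw [← add_assoc, LL, LL, mul_assoc, ih]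

lemma Tz.derive {α : Type*} {a : ℕ → α} {n : ℕ → ℕ} {q : ℕ → α} (hn : ∀ k, 2 ≤ n k)
    (hq : Tz a n q) (k0 : ℕ) :
    Tz (fun k => a (k0 + k)) (fun k => n (k0 + k)) (fun j => q (j * LL n k0)) := by
  intro k j hj h1 h2
  have hL := LL_pos hn k0
  apply hq (k0 + k) _ (Nat.mul_pos hj hL)
  · rw [← LL_shift]; exact Nat.mul_dvd_mul_right h1 _
  · rw [add_assoc, ← LL_shift]; exact fun h => h2 (Nat.dvd_of_mul_dvd_mul_right hL h)

lemma ev_rec [Finite 𝒜] (a : ℕ → 𝒜) : ∃ k0, ∀ k, k0 ≤ k → a k ∈ EvAlph a := by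
  classical
  have := Fintype.ofFinite 𝒜
  have : ∀ x : 𝒜, ∃ K, x ∉ EvAlph a → ∀ k, K ≤ k → a k ≠ x := by
    intro x
    by_cases hx : x ∈ EvAlph a
    · exact ⟨0, fun h => absurd hx h⟩
    · simp only [EvAlph, Set.mem_ofPred_eq] at hx
      push Not at hx
      obtain ⟨K, hK⟩ := hx
      exact ⟨K, fun _ => hK⟩
  choose K hK using this
  refine ⟨Finset.univ.sup K, fun k hk => ?_⟩
  by_contra h
  exact hK (a k) h k ((Finset.le_sup (Finset.mem_univ _)).trans hk) rfl

lemma word_eq {ω ρ : ℤ → 𝒜} {i j : ℤ} {m : ℕ} (h : word ω i m = word ρ j m) (t : ℕ) (ht : t < m) :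
    ω (i + t) = ρ (j + t) := by
  have := congrArg (fun l => l[t]?) h
  simp only [word_get _ _ _ _ ht] at this
  exact Option.some.inj this

/-- window function extending a locally constant function -/
lemma window [Finite 𝒜] (Ω : Set (ℤ → 𝒜)) (A : (ℤ → 𝒜) → SL2) (hA : LocConstOn Ω A) :
    ∃ (N : ℕ) (B : (ℤ → 𝒜) → SL2) (κ : ℝ), (∀ ω ∈ Ω, B ω = A ω) ∧
      (∀ ρ ρ' : ℤ → 𝒜, (∀ i : ℤ, |i| ≤ (N : ℤ) → ρ i = ρ' i) → B ρ = B ρ') ∧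
      ∀ ρ, lam (B ρ) ≤ κ := by
  classical
  obtain ⟨N, hN⟩ := hA
  let B : (ℤ → 𝒜) → SL2 := fun ρ =>
    if h : ∃ ω ∈ Ω, ∀ i : ℤ, |i| ≤ (N : ℤ) → ω i = ρ i then A h.choose else 1
  have hB1 : ∀ ω ∈ Ω, ∀ ρ, (∀ i : ℤ, |i| ≤ (N : ℤ) → ω i = ρ i) → B ρ = A ω := by
    intro ω hω ρ h
    have hex : ∃ ω ∈ Ω, ∀ i : ℤ, |i| ≤ (N : ℤ) → ω i = ρ i := ⟨ω, hω, h⟩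
    simp only [B, dif_pos hex]
    exact hN _ hex.choose_spec.1 _ hω fun i hi => by rw [hex.choose_spec.2 i hi, h i hi]
  have hB2 : ∀ ρ ρ' : ℤ → 𝒜, (∀ i : ℤ, |i| ≤ (N : ℤ) → ρ i = ρ' i) → B ρ = B ρ' := by
    intro ρ ρ' h
    by_cases hex : ∃ ω ∈ Ω, ∀ i : ℤ, |i| ≤ (N : ℤ) → ω i = ρ i
    · obtain ⟨ω, hω, h1⟩ := hex
      rw [hB1 ω hω ρ h1, hB1 ω hω ρ' fun i hi => by rw [h1 i hi, h i hi]]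
    · have hex' : ¬ ∃ ω ∈ Ω, ∀ i : ℤ, |i| ≤ (N : ℤ) → ω i = ρ' i := by
        rintro ⟨ω, hω, h1⟩
        exact hex ⟨ω, hω, fun i hi => by rw [h1 i hi, h i hi]⟩
      simp only [B, dif_neg hex, dif_neg hex']
  have hB3 : ∀ ω ∈ Ω, B ω = A ω := fun ω hω => hB1 ω hω ω fun _ _ => rfl
  clear_value B
  refine ⟨N, B, ?_⟩
  rcases isEmpty_or_nonempty 𝒜 with he | ⟨⟨x0⟩⟩
  · exact ⟨0, hB3, hB2, fun ρ => (he.false (ρ 0)).elim⟩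
  · have hS : ∀ ρ : ℤ → 𝒜, lam (B ρ) ∈ Set.range fun w : (Finset.Icc (-(N : ℤ)) N → 𝒜) =>
        lam (B fun i => if h : i ∈ Finset.Icc (-(N : ℤ)) N then w ⟨i, h⟩ else x0) := by
      intro ρ
      refine ⟨fun i => ρ i.1, ?_⟩
      have e : (B fun i => if h : i ∈ Finset.Icc (-(N : ℤ)) N then
          (fun i : Finset.Icc (-(N : ℤ)) N => ρ i.1) ⟨i, h⟩ else x0) = B ρ := by
        apply hB2
        intro i hi
        have : i ∈ Finset.Icc (-(N : ℤ)) N := Finset.mem_Icc.2 (abs_le.1 hi)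
        rw [dif_pos this]
      exact congrArg lam e
    obtain ⟨κ, hκ⟩ := (Set.finite_range fun w : (Finset.Icc (-(N : ℤ)) N → 𝒜) =>
        lam (B fun i => if h : i ∈ Finset.Icc (-(N : ℤ)) N then w ⟨i, h⟩ else x0)).bddAbove
    exact ⟨κ, hB3, hB2, fun ρ => hκ (hS ρ)⟩

end

end Toep
namespace Toep

section
variable {𝒜 : Type*}

lemma shift_mem {p ω : ℤ → 𝒜} (hω : ω ∈ toeplitzΩ p) (s : ℤ) : shift s ω ∈ toeplitzΩ p := by
  intro i m
  obtain ⟨l, hl, h⟩ := hω (i + s) m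
  refine ⟨l, hl, ?_⟩
  rw [← h, word_map, word_map]
  apply List.map_congr_left
  intro t _
  show ω _ = ω _
  congr 1; ring

lemma cocycle_pr {p : ℤ → 𝒜} {A B : (ℤ → 𝒜) → SL2} {N : ℕ}
    (hAB : ∀ ω ∈ toeplitzΩ p, B ω = A ω)
    (hB : ∀ ρ ρ' : ℤ → 𝒜, (∀ i : ℤ, |i| ≤ (N : ℤ) → ρ i = ρ' i) → B ρ = B ρ')
    {ω : ℤ → 𝒜} (hω : ω ∈ toeplitzΩ p) (m : ℕ) :
    ∃ i : ℕ, 1 ≤ i ∧ cocycleP A m ω = pr (fun i : ℕ => B (shift i p)) i m := by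
  obtain ⟨l, hl, h⟩ := hω (-N) (m + 2 * N + 1)
  obtain ⟨l, rfl⟩ := Int.eq_ofNat_of_zero_le (by omega : 0 ≤ l)
  refine ⟨l + N, by omega, ?_⟩
  have key : ∀ s < m, A (shift s ω) = B (shift ((l + N + s : ℕ) : ℤ) p) := by
    intro s hs
    rw [← hAB _ (shift_mem hω s)]
    apply hB
    intro i hi
    rw [abs_le] at hi
    obtain ⟨t, ht⟩ := Int.eq_ofNat_of_zero_le (by omega : 0 ≤ i + s + N)
    have := word_eq h t (by omega)
    unfold shift
    rw [show i + (s : ℤ) = -N + t by omega, this]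
    congr 1; push_cast; omega
  clear h
  induction m with
  | zero => rfl
  | succ m ih =>
    rw [cocycleP, pr, ih fun s hs => key s (by omega), key m (by omega)]

lemma transfer {p : ℤ → 𝒜} {a : ℕ → 𝒜} {n : ℕ → ℕ} (hn : ∀ k, 2 ≤ n k)
    (hq : Tz a n (fun i : ℕ => p i)) {B : (ℤ → 𝒜) → SL2} {N : ℕ}
    (hB : ∀ ρ ρ' : ℤ → 𝒜, (∀ i : ℤ, |i| ≤ (N : ℤ) → ρ i = ρ' i) → B ρ = B ρ')
    (k0 : ℕ) (hk0 : 2 * N + 2 ≤ LL n k0) :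
    ∃ M : 𝒜 → SL2, ∀ j m : ℕ, 1 ≤ j →
      pr (fun i : ℕ => B (shift i p)) (j * LL n k0 - (N + 1)) (m * LL n k0)
        = pr (fun j : ℕ => M (p ((j * LL n k0 : ℕ) : ℤ))) j m := by
  set L := LL n k0 with hL
  let R : 𝒜 → ℤ → 𝒜 := fun x t => if t = 0 then x else p (t % L)
  let M : 𝒜 → SL2 := fun x => pr (fun s : ℕ => B (shift ((s : ℤ) - (N + 1)) (R x))) 0 L
  have hp0 : ∀ (j : ℕ) (t : ℤ), 1 ≤ j → t ≠ 0 → -(L : ℤ) < t → t < L →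
      p ((j * L : ℕ) + t) = p (t % L) := by
    intro j t hj h0 h1 h2
    obtain ⟨j, rfl⟩ : ∃ j', j = j' + 1 := ⟨j - 1, by omega⟩
    rcases lt_or_gt_of_ne h0 with h | h
    · obtain ⟨u, hu⟩ := Int.eq_ofNat_of_zero_le (by omega : 0 ≤ t + L)
      have e1 : t % (L : ℤ) = u := by
        have h5 : (t + L) % (L : ℤ) = t + L := Int.emod_eq_of_lt (by omega) (by omega)
        rw [Int.add_emod_right] at h5
        omega
      have e2 : (((j + 1) * L : ℕ) : ℤ) + t = ((u + j * L : ℕ) : ℤ) := by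
        push_cast; linarith
      rw [e1, e2]
      exact hq.per (K := k0) (by omega) (ndvd (by omega) (by omega)) (dvd_mul_left _ _)
    · obtain ⟨u, hu⟩ := Int.eq_ofNat_of_zero_le (by omega : 0 ≤ t)
      have e1 : t % (L : ℤ) = u := by rw [Int.emod_eq_of_lt (by omega) (by omega), hu]
      have e2 : (((j + 1) * L : ℕ) : ℤ) + t = ((u + (j + 1) * L : ℕ) : ℤ) := by
        rw [hu]; push_cast; simp [add_comm]
      rw [e1, e2]
      exact hq.per (K := k0) (by omega) (ndvd (by omega) (by omega)) (dvd_mul_left _ _)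
  have hblock : ∀ j : ℕ, 1 ≤ j →
      pr (fun i : ℕ => B (shift i p)) (j * L - (N + 1)) L = M (p ((j * L : ℕ) : ℤ)) := by
    intro j hj
    have hjL : L ≤ j * L := Nat.le_mul_of_pos_left _ hj
    apply pr_congr
    intro s hs
    apply hB
    intro i hi
    rw [abs_le] at hi
    show p (i + ((j * L - (N + 1) + s : ℕ) : ℤ)) = R _ (i + (((0 + s : ℕ) : ℤ) - (N + 1)))
    have e : i + ((j * L - (N + 1) + s : ℕ) : ℤ) = ((j * L : ℕ) : ℤ) + (i + (((0 + s : ℕ) : ℤ) - (N + 1))) := by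
      generalize j * L = Q at hjL ⊢
      omega
    rw [e]
    generalize ht : i + (((0 + s : ℕ) : ℤ) - (N + 1)) = t
    by_cases h0 : t = 0
    · simp [R, h0]
    · simp only [R, if_neg h0]
      exact hp0 j t hj h0 (by omega) (by omega)
  refine ⟨M, fun j m hj => ?_⟩
  have hjL : L ≤ j * L := Nat.le_mul_of_pos_left _ hj
  induction m with
  | zero => simp [pr]
  | succ m ih =>
    rw [Nat.succ_mul, pr_add, ih, pr]
    congr 1
    rw [← hblock (j + m) (by omega)]
    congr 1
    rw [add_mul]
    omega

end

end Toep

/-- Every locally constant `SL(2,ℝ)`-valued function on a simple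
Toeplitz subshift whose eventual alphabet has at least two letters is uniform. -/
theorem statement16 {𝒜 : Type*} [Fintype 𝒜]
    (a : ℕ → 𝒜) (nseq : ℕ → ℕ) (ha : ∀ k, a (k + 1) ≠ a k) (hn : ∀ k, 2 ≤ nseq k)
    (p : ℤ → 𝒜) (hp : IsBlockInf a nseq p)
    (hcard : ∃ x y : 𝒜, x ∈ EvAlph a ∧ y ∈ EvAlph a ∧ x ≠ y)
    (A : (ℤ → 𝒜) → SL2) (hA : LocConstOn (toeplitzΩ p) A) :
    IsUniform (toeplitzΩ p) A := by
  open Toep in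
  obtain ⟨N, B, κ, hAB, hB, hκ⟩ := window _ A hA
  obtain ⟨k1, hk1⟩ := ev_rec a
  have hq := block_Tz hn hp
  set k0 := max k1 (2 * N + 2) with hk0
  have hL2 : 2 * N + 2 ≤ LL nseq k0 := (le_max_right _ _).trans (LL_lt hn k0).le
  obtain ⟨M, hM⟩ := transfer hn hq hB k0 hL2
  set L := LL nseq k0 with hL
  set F : ℕ → SL2 := fun i => B (shift i p) with hF
  have hκF : ∀ i, lam (F i) ≤ κ := fun i => hκ _
  have hκ0 : 0 ≤ κ := (lam_nonneg _).trans (hκF 0)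
  have hTz := (hq.derive hn k0).map M
  obtain ⟨κ', hκ'⟩ := (Set.finite_range fun x => lam (M x)).bddAbove
  obtain ⟨Λ, hΛ⟩ := hTz.core (fun k => hn (k0 + k))
    (by
      intro k K
      obtain ⟨k', h1, h2⟩ := hk1 (k0 + k) (by omega) (k0 + K)
      refine ⟨k' - k0, by omega, ?_⟩
      rw [← h2, show k0 + (k' - k0) = k' by omega])
    ((Set.finite_range M).subset (by rintro _ ⟨k, rfl⟩; exact ⟨_, rfl⟩)) κ'
    (fun i => hκ' ⟨_, rfl⟩)
  have hLp : (0 : ℝ) < L := by exact_mod_cast (by omega : 0 < L)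
  have main : ∀ ε > 0, ∃ C : ℝ, ∀ i m : ℕ, 1 ≤ i →
      |lam (pr F i m) - Λ / L * m| ≤ ε * m + C := by
    intro ε hε
    obtain ⟨C, hC⟩ := hΛ ε hε
    refine ⟨|C| + 3 * L * κ + 3 * |Λ|, fun i m hi => ?_⟩
    have hΛL : Λ / L * L = Λ := by field_simp
    have hm0 : 0 ≤ ε * m := by positivity
    have n1 := abs_nonneg C
    have n2 := le_abs_self C
    rcases lt_or_ge m (2 * L) with hm | hm
    · have h1 := pr_lam hκF i m
      have h2 : (m : ℝ) ≤ 2 * L := by exact_mod_cast hm.le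
      have h3 := mul_le_mul_of_nonneg_right h2 hκ0
      have h4 : |Λ / L * m| ≤ 2 * |Λ| := by
        rw [abs_mul, abs_div, abs_of_pos hLp, abs_of_nonneg (Nat.cast_nonneg m : (0:ℝ) ≤ (m:ℝ)), div_mul_eq_mul_div,
          div_le_iff₀ hLp]
        have := mul_le_mul_of_nonneg_left h2 (abs_nonneg Λ)
        linarith
      refine (abs_sub _ _).trans ?_
      rw [abs_of_nonneg (lam_nonneg _)]
      have : 0 ≤ L * κ := by positivity
      linarith [abs_nonneg Λ]
    · obtain ⟨j, d, hj, hd, hjd⟩ : ∃ j d : ℕ, 1 ≤ j ∧ d ≤ 2 * L ∧ i + d = j * L - (N + 1) := by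
        have h1 := Nat.div_add_mod' i L
        have h2 := Nat.mod_lt i (by omega : 0 < L)
        refine ⟨i / L + 2, (i / L + 2) * L - (N + 1) - i, Nat.succ_le_of_lt (Nat.succ_pos _), ?_, ?_⟩ <;>
          rw [add_mul] <;> omega
      obtain ⟨t, s, hs, hts⟩ : ∃ t s, s < L ∧ m - d = t * L + s :=
        ⟨(m - d) / L, (m - d) % L, Nat.mod_lt _ (by omega), (Nat.div_add_mod' _ _).symm⟩
      have hm' : m = d + (t * L + s) := by omega
      have h1 := hM j t hj
      have h2 := hC j t hj
      have e : pr F i m = pr F (i + d + t * L) s *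
          pr (fun j : ℕ => M (p ((j * L : ℕ) : ℤ))) j t * pr F i d := by
        rw [hm', pr_add, pr_add, hjd, h1]
      have g1 := lam_mul (pr F (i + d + t * L) s *
          pr (fun j : ℕ => M (p ((j * L : ℕ) : ℤ))) j t) (pr F i d)
      have g2 := lam_mul (pr F (i + d + t * L) s)
          (pr (fun j : ℕ => M (p ((j * L : ℕ) : ℤ))) j t)
      have g3 := lam_of_mul' (pr F (i + d + t * L) s *
          pr (fun j : ℕ => M (p ((j * L : ℕ) : ℤ))) j t) (pr F i d)
      have g4 := lam_of_mul (pr F (i + d + t * L) s)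
          (pr (fun j : ℕ => M (p ((j * L : ℕ) : ℤ))) j t)
      rw [← e] at g1 g3
      have b1 := pr_lam hκF (i + d + t * L) s
      have b2 := pr_lam hκF i d
      have c1 : (s : ℝ) ≤ L := by exact_mod_cast hs.le
      have c2 : (d : ℝ) ≤ 2 * L := by exact_mod_cast hd
      have c3 := mul_le_mul_of_nonneg_right c1 hκ0
      have c4 := mul_le_mul_of_nonneg_right c2 hκ0
      have c5 : (m : ℝ) = d + (t * L + s) := by exact_mod_cast hm'
      have c6 : (t : ℝ) ≤ m := by
        have : t ≤ t * L := Nat.le_mul_of_pos_right _ (by omega)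
        exact_mod_cast (by omega : t ≤ m)
      have c7 := mul_le_mul_of_nonneg_left c6 hε.le
      have c8 : |Λ / L * m - Λ * t| ≤ 3 * |Λ| := by
        have : Λ / L * m - Λ * t = Λ / L * (d + s) := by
          rw [c5]; linear_combination t * hΛL
        rw [this, abs_mul, abs_div, abs_of_pos hLp, abs_of_nonneg (by positivity : (0:ℝ) ≤ (d:ℝ) + s),
          div_mul_eq_mul_div, div_le_iff₀ hLp]
        have := mul_le_mul_of_nonneg_left (add_le_add c2 c1) (abs_nonneg Λ)
        linarith
      rw [abs_le] at h2 c8 ⊢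
      constructor <;> linarith
  refine ⟨Λ / L, ?_⟩
  rw [Metric.tendstoUniformlyOn_iff]
  intro ε hε
  obtain ⟨C, hC⟩ := main (ε / 2) (by positivity)
  obtain ⟨n0, hn0⟩ := exists_nat_gt (2 * C / ε)
  filter_upwards [eventually_ge_atTop (n0 + 1)] with m hm ω hω
  obtain ⟨i, hi, hc⟩ := cocycle_pr hAB hB hω m
  have h1 := hC i m hi
  have hm0 : (0 : ℝ) < m := by exact_mod_cast (by omega : 0 < m)
  have hm1 : (n0 : ℝ) ≤ m := by exact_mod_cast (by omega : n0 ≤ m)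
  have e : Real.log (slNorm (cocycle A m ω)) = lam (pr F i m) := by
    rw [cocycle, if_pos (Int.natCast_nonneg m), Int.toNat_natCast, hc]; rfl
  rw [dist_comm, Real.dist_eq, e]
  have e2 : lam (pr F i m) / m - Λ / L = (lam (pr F i m) - Λ / L * m) / m := by
    field_simp
  rw [e2, abs_div, abs_of_pos hm0, div_lt_iff₀ hm0]
  have h2 : C < ε / 2 * m := by
    rw [div_lt_iff₀ hε] at hn0
    nlinarith
  linarith
end

section
/- Let α ∈ (0,1) be irrational and let (Ω(α),T) be the Sturmian subshift with rotation number α. Then every locally constant A : Ω(α) → SL(2,ℝ) is uniform: there is Λ ∈ ℝ such that (1/n) log‖A(n,ω)‖ → Λ as n → ∞ uniformly in ω ∈ Ω(α). -/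
open Filter Topology MeasureTheory

noncomputable section

theorem st_slNorm_mul (M N : SL2) : slNorm (M * N) ≤ slNorm M * slNorm N := by
  unfold slNorm matNorm
  refine ContinuousLinearMap.opNorm_le_bound _ (by positivity) ?_
  intro x
  have h : (LinearMap.toContinuousLinearMap (Matrix.toEuclideanLin (M * N).1)) x
      = (LinearMap.toContinuousLinearMap (Matrix.toEuclideanLin M.1))
        ((LinearMap.toContinuousLinearMap (Matrix.toEuclideanLin N.1)) x) := by
    ext i
    simp [Matrix.toLpLin_apply, Matrix.mulVec_mulVec]
  rw [h, mul_assoc]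
  refine (ContinuousLinearMap.le_opNorm _ _).trans ?_
  gcongr
  exact ContinuousLinearMap.le_opNorm _ _

/-- column bound -/
theorem st_col (M : Matrix (Fin 2) (Fin 2) ℝ) (j : Fin 2) :
    M 0 j ^ 2 + M 1 j ^ 2 ≤ matNorm M ^ 2 := by
  have h := ContinuousLinearMap.le_opNorm
    (LinearMap.toContinuousLinearMap (Matrix.toEuclideanLin M)) (EuclideanSpace.single j 1)
  have h2 : ‖(EuclideanSpace.single j (1:ℝ) : EuclideanSpace ℝ (Fin 2))‖ = 1 := by simp
  rw [h2, mul_one] at h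
  have h3 : ‖(LinearMap.toContinuousLinearMap (Matrix.toEuclideanLin M))
      (EuclideanSpace.single j 1)‖ ^ 2 = M 0 j ^ 2 + M 1 j ^ 2 := by
    rw [EuclideanSpace.norm_sq_eq]
    simp [Matrix.toLpLin_apply]
  rw [← h3]
  unfold matNorm
  gcongr

theorem st_matNorm_nonneg (M : Matrix (Fin 2) (Fin 2) ℝ) : 0 ≤ matNorm M := norm_nonneg _

theorem st_entry (M : Matrix (Fin 2) (Fin 2) ℝ) (i j : Fin 2) : |M i j| ≤ matNorm M := by
  have h := st_col M j
  apply abs_le_of_sq_le_sq _ (st_matNorm_nonneg M)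
  fin_cases i
  · simp only [Fin.zero_eta]; nlinarith [sq_nonneg (M 1 j)]
  · simp only [Fin.mk_one]; nlinarith [sq_nonneg (M 0 j)]

theorem st_one_le (M : SL2) : 1 ≤ slNorm M := by
  have h0 := st_col M.1 0
  have h1 := st_col M.1 1
  have hd : M.1 0 0 * M.1 1 1 - M.1 0 1 * M.1 1 0 = 1 := by
    rw [← Matrix.det_fin_two]; exact M.2
  have hn := st_matNorm_nonneg M.1
  change 1 ≤ matNorm M.1
  set a := M.1 0 0
  set b := M.1 0 1
  set c := M.1 1 0
  set d := M.1 1 1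
  nlinarith [sq_nonneg (a - d), sq_nonneg (b + c)]

/-- the norm is at most twice some entry -/
theorem st_le_entry (M : Matrix (Fin 2) (Fin 2) ℝ) :
    ∃ i j, matNorm M ≤ 2 * |M i j| ∧ ∀ k l, |M k l| ≤ |M i j| := by
  obtain ⟨p, hp⟩ := Finite.exists_max (fun p : Fin 2 × Fin 2 => |M p.1 p.2|)
  refine ⟨p.1, p.2, ?_, fun k l => hp (k, l)⟩
  unfold matNorm
  refine ContinuousLinearMap.opNorm_le_bound _ (by positivity) ?_
  intro x
  set m := |M p.1 p.2| with hm
  have hb : ∀ k l, |M k l| ≤ m := fun k l => hp (k, l)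
  have hm0 : 0 ≤ m := abs_nonneg _
  apply le_of_sq_le_sq _ (by positivity)
  rw [mul_pow, EuclideanSpace.norm_sq_eq, EuclideanSpace.norm_sq_eq]
  simp [Matrix.toLpLin_apply, Matrix.mulVec, dotProduct, Fin.sum_univ_two]
  have hs : ∀ k l, (M k l) ^ 2 ≤ m ^ 2 := fun k l => by
    rw [← sq_abs]; exact pow_le_pow_left₀ (abs_nonneg _) (hb k l) 2
  have key : ∀ k, (M k 0 * x 0 + M k 1 * x 1) ^ 2 ≤ 2 * m ^ 2 * (x 0 ^ 2 + x 1 ^ 2) := by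
    intro k
    have h0 := hs k 0
    have h1 := hs k 1
    nlinarith [sq_nonneg (M k 0 * x 1 - M k 1 * x 0), sq_nonneg (x 0), sq_nonneg (x 1),
      mul_le_mul_of_nonneg_right h0 (add_nonneg (sq_nonneg (x 0)) (sq_nonneg (x 1))),
      mul_le_mul_of_nonneg_right h1 (add_nonneg (sq_nonneg (x 0)) (sq_nonneg (x 1)))]
  have := key 0
  have := key 1
  nlinarith

theorem st_aval (A B C : SL2) : slNorm (A * B) * slNorm (B * C) ≤
    4 * (slNorm (A * B * C) * slNorm B + slNorm A * slNorm C) := by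
  obtain ⟨i, j, h1, -⟩ := st_le_entry (A * B).1
  obtain ⟨k, l, h2, -⟩ := st_le_entry (B * C).1
  have hB : B.1 0 0 * B.1 1 1 - B.1 0 1 * B.1 1 0 = 1 := by
    rw [← Matrix.det_fin_two]; exact B.2
  have e1 := st_entry (A * B * C).1 i l
  have e2 := st_entry B.1 k j
  have e3 : ∀ m, |A.1 i m| ≤ matNorm A.1 := fun m => st_entry A.1 i m
  have e4 : ∀ m, |C.1 m l| ≤ matNorm C.1 := fun m => st_entry C.1 m l
  have id : ∃ m m', |(A * B).1 i j * (B * C).1 k l - (A * B * C).1 i l * B.1 k j|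
      = |A.1 i m * C.1 m' l| := by
    refine ⟨1 - k, 1 - j, ?_⟩
    simp only [Matrix.SpecialLinearGroup.coe_mul, Matrix.mul_apply, Fin.sum_univ_two]
    rw [abs_eq_abs]
    fin_cases k <;> fin_cases j <;> simp
    · right; linear_combination (A.1 i 1 * C.1 1 l) * (-hB)
    · left; linear_combination (A.1 i 1 * C.1 0 l) * (hB)
    · left; linear_combination (A.1 i 0 * C.1 1 l) * (hB)
    · right; linear_combination (A.1 i 0 * C.1 0 l) * (-hB)
  obtain ⟨m, m', hid⟩ := id
  have n1 := st_matNorm_nonneg (A * B).1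
  have n2 := st_matNorm_nonneg (B * C).1
  have f1 : slNorm (A * B) * slNorm (B * C) ≤ (2 * |(A * B).1 i j|) * (2 * |(B * C).1 k l|) := by
    unfold slNorm
    exact mul_le_mul h1 h2 n2 (by positivity)
  have f2 : |(A * B).1 i j| * |(B * C).1 k l| ≤ |(A * B * C).1 i l| * |B.1 k j|
      + |A.1 i m| * |C.1 m' l| := by
    rw [← abs_mul, ← abs_mul, ← abs_mul, ← hid]
    have := abs_sub_abs_le_abs_sub ((A * B).1 i j * (B * C).1 k l) ((A * B * C).1 i l * B.1 k j)
    linarith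
  have f3 : |(A * B * C).1 i l| * |B.1 k j| ≤ slNorm (A * B * C) * slNorm B :=
    mul_le_mul e1 e2 (abs_nonneg _) (st_matNorm_nonneg _)
  have f4 : |A.1 i m| * |C.1 m' l| ≤ slNorm A * slNorm C :=
    mul_le_mul (e3 m) (e4 m') (abs_nonneg _) (st_matNorm_nonneg _)
  nlinarith

end

noncomputable section

theorem st_step (a b c ab bc abc κ : ℝ) (h1 : a + b - κ + 3 ≤ ab) (h2 : c + b - κ ≤ bc)
    (h3 : κ ≤ b)
    (h : Real.exp ab * Real.exp bc ≤
      4 * (Real.exp abc * Real.exp b + Real.exp a * Real.exp c)) :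
    a + bc - κ ≤ abc := by
  rw [← Real.exp_add, ← Real.exp_add, ← Real.exp_add] at h
  have e1 : Real.exp (a + c) ≤ Real.exp (a + b - κ + bc) := Real.exp_le_exp.2 (by linarith)
  have e2 : Real.exp (3 + (a + b - κ + bc)) ≤ Real.exp (ab + bc) :=
    Real.exp_le_exp.2 (by linarith)
  rw [Real.exp_add] at e2
  have e3 : (8 : ℝ) ≤ Real.exp 3 := by
    have : Real.exp 3 = Real.exp 1 ^ 3 := by rw [← Real.exp_nat_mul]; norm_num
    rw [this]
    have h2 : (2 : ℝ) ≤ Real.exp 1 := by have := Real.add_one_le_exp 1; linarith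
    calc (8 : ℝ) = 2 ^ 3 := by norm_num
      _ ≤ _ := pow_le_pow_left₀ (by norm_num) h2 3
  have p := Real.exp_pos (a + b - κ + bc)
  have e4 : Real.exp (a + b - κ + bc) ≤ Real.exp (abc + b) := by nlinarith
  have := Real.exp_le_exp.1 e4
  linarith

theorem st_shift_shift {𝒜 : Type*} (a b : ℤ) (ω : ℤ → 𝒜) :
    shift a (shift b ω) = shift (b + a) ω := by
  funext n
  simp only [shift]; congr 1; ring

theorem st_cocycleP_add {𝒜 : Type*} (A : (ℤ → 𝒜) → SL2) (n m : ℕ) (ω : ℤ → 𝒜) :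
    cocycleP A (n + m) ω = cocycleP A m (shift n ω) * cocycleP A n ω := by
  induction m with
  | zero => simp [cocycleP]
  | succ m ih =>
    rw [← add_assoc]
    simp only [cocycleP]
    rw [ih, st_shift_shift, mul_assoc]
    push_cast
    rfl

theorem st_lower {𝒜 : Type*} (Ω : Set (ℤ → 𝒜)) (F : ℕ → (ℤ → 𝒜) → ℝ) (Λ : ℝ)
    (hinv : ∀ ω ∈ Ω, ∀ n : ℕ, shift n ω ∈ Ω)
    (F0 : ∀ n ω, 0 ≤ F n ω)
    (Fsub : ∀ n m ω, F (n + m) ω ≤ F n ω + F m (shift n ω))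
    (Fav : ∀ (n l : ℕ) (ω : ℤ → 𝒜), Real.exp (F (l + l) (shift n ω)) * Real.exp (F (n + l) ω) ≤
      4 * (Real.exp (F (n + l + l) ω) * Real.exp (F l (shift n ω)) +
        Real.exp (F l (shift ((n + l : ℕ) : ℤ) ω)) * Real.exp (F n ω)))
    (hinf : ∀ n : ℕ, 1 ≤ n → ∀ x, (∀ ω ∈ Ω, F n ω ≤ x) → n * Λ ≤ x)
    (hup : ∀ δ > 0, ∃ C0 : ℝ, 0 ≤ C0 ∧ ∀ n : ℕ, ∀ ω ∈ Ω, F n ω ≤ (Λ + δ) * n + C0)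
    (hD : ∀ L0 : ℕ, ∃ L ≥ L0, ∀ ω ∈ Ω, ∀ ρ ∈ Ω, ∃ t : ℕ, t ≤ 8 * L ∧ ∀ m ≤ L,
      F m (shift t ω) = F m ρ)
    (ε : ℝ) (hε : 0 < ε) (hεΛ : 6 * ε ≤ Λ) :
    ∃ n1 : ℕ, ∀ n ≥ n1, ∀ ω ∈ Ω, (Λ - 7 * ε) * n ≤ F n ω := by
  obtain ⟨C0, hC0, hup⟩ := hup (ε / 72) (by positivity)
  obtain ⟨L, hL, hD⟩ := hD (max 12 (⌈4 * (4 * C0 + 3) / ε⌉₊))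
  have hL12 : 12 ≤ L := (le_max_left _ _).trans hL
  have hL' : 4 * (4 * C0 + 3) / ε ≤ (L : ℝ) :=
    (Nat.le_ceil _).trans (by exact_mod_cast (le_max_right _ _).trans hL)
  rw [div_le_iff₀ hε] at hL'
  have scale : ∀ m : ℕ, L ≤ 4 * m → m ≤ L → ∀ ω ∈ Ω, (Λ - ε) * m ≤ F m ω := by
    intro m hm1 hm2 ρ hρ
    by_contra hlt
    push Not at hlt
    have key : ((9 * L : ℕ) : ℝ) * Λ ≤ (Λ + ε / 72) * (9 * L - m) + 2 * C0 + (Λ - ε) * m := by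
      apply hinf _ (by omega)
      intro ω hω
      obtain ⟨t, ht, hD⟩ := hD ω hω ρ hρ
      obtain ⟨r, hr⟩ : ∃ r, 9 * L = t + (m + r) := ⟨9 * L - t - m, by omega⟩
      have s1 := Fsub t (m + r) ω
      have s2 := Fsub m r (shift t ω)
      rw [← hr] at s1
      rw [hD m hm2] at s2
      have u1 := hup t ω hω
      have u2 := hup r (shift m (shift t ω)) (hinv _ (hinv _ hω _) _)
      have : (9 * L : ℝ) = t + (m + r) := by exact_mod_cast hr
      rw [this]
      nlinarith
    have hm1' : (L : ℝ) ≤ 4 * m := by exact_mod_cast hm1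
    push_cast at key
    nlinarith
  obtain ⟨l, hl⟩ : ∃ l, l = L / 4 + 1 := ⟨_, rfl⟩
  have hl1 : L ≤ 4 * l := by omega
  have hl2 : 3 * l ≤ L := by omega
  have hl1' : (L : ℝ) ≤ 4 * l := by exact_mod_cast hl1
  have hlε : 4 * C0 + 3 ≤ ε * l := by nlinarith
  have base : ∀ n, l ≤ n → n ≤ 2 * l → ∀ ω ∈ Ω,
      F n ω + F l (shift n ω) - 5 * ε * l + 3 ≤ F (n + l) ω := by
    intro n hn1 hn2 ω hω
    have s := scale (n + l) (by omega) (by omega) ω hω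
    have u1 := hup n ω hω
    have u2 := hup l (shift n ω) (hinv _ hω _)
    have hn2' : (n : ℝ) ≤ 2 * l := by exact_mod_cast hn2
    push_cast at s
    nlinarith
  have big : ∀ ω ∈ Ω, 5 * ε * l ≤ F l ω := by
    intro ω hω
    have s := scale l (by omega) (by omega) ω hω
    have : (0:ℝ) ≤ l := by positivity
    nlinarith
  have step : ∀ n, l ≤ n → ∀ ω ∈ Ω, F n ω + F l (shift n ω) - 5 * ε * l ≤ F (n + l) ω := by
    intro n
    induction n using Nat.strong_induction_on with
    | _ n ih =>
      intro hn ω hω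
      by_cases hn2 : n ≤ 2 * l
      · have := base n hn hn2 ω hω
        linarith
      · obtain ⟨k, rfl⟩ : ∃ k, n = k + l := ⟨n - l, by omega⟩
        have i := ih k (by omega) (by omega) ω hω
        have b := base l le_rfl (by omega) (shift k ω) (hinv _ hω _)
        have g := big (shift k ω) (hinv _ hω _)
        rw [st_shift_shift] at b
        have av := Fav k l ω
        have := st_step (F l (shift ((k + l : ℕ) : ℤ) ω)) (F l (shift k ω)) (F k ω)
          (F (l + l) (shift k ω)) (F (k + l) ω) (F (k + l + l) ω) (5 * ε * l)
          (by push_cast at b ⊢; linarith) (by linarith) g av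
        linarith
  have grow : ∀ n : ℕ, ∀ ω ∈ Ω, ((n : ℝ) - 2 * l) * (Λ - 6 * ε) ≤ F n ω := by
    intro n
    induction n using Nat.strong_induction_on with
    | _ n ih =>
      intro ω hω
      by_cases hn2 : n ≤ 2 * l
      · have hn2' : (n : ℝ) ≤ 2 * l := by exact_mod_cast hn2
        have := F0 n ω
        nlinarith
      · obtain ⟨k, rfl⟩ : ∃ k, n = k + l := ⟨n - l, by omega⟩
        have i := ih k (by omega) ω hω
        have s := step k (by omega) ω hω
        have b := scale l (by omega) (by omega) (shift k ω) (hinv _ hω _)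
        push_cast
        nlinarith
  refine ⟨⌈2 * l * Λ / ε⌉₊, fun n hn ω hω => ?_⟩
  have hn' : 2 * l * Λ / ε ≤ (n : ℝ) := (Nat.le_ceil _).trans (by exact_mod_cast hn)
  rw [div_le_iff₀ hε] at hn'
  have g := grow n ω hω
  have : (0:ℝ) ≤ l := by positivity
  nlinarith

theorem st_uniform {𝒜 : Type*} (Ω : Set (ℤ → 𝒜)) (A : (ℤ → 𝒜) → SL2)
    (hinv : ∀ ω ∈ Ω, ∀ n : ℕ, shift n ω ∈ Ω)
    (C : ℝ) (hC : ∀ ω ∈ Ω, Real.log (slNorm (A ω)) ≤ C)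
    (hD : ∀ L0 : ℕ, ∃ L ≥ L0, ∀ ω ∈ Ω, ∀ ρ ∈ Ω, ∃ t : ℕ, t ≤ 8 * L ∧ ∀ m ≤ L,
      cocycleP A m (shift t ω) = cocycleP A m ρ) :
    IsUniform Ω A := by
  rcases Ω.eq_empty_or_nonempty with rfl | ⟨ω0, hω0⟩
  · exact ⟨0, tendstoUniformlyOn_empty⟩
  obtain ⟨F, hF⟩ : ∃ F : ℕ → (ℤ → 𝒜) → ℝ, ∀ n ω, F n ω = Real.log (slNorm (cocycleP A n ω)) :=
    ⟨_, fun _ _ => rfl⟩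
  have hpos : ∀ M : SL2, 0 < slNorm M := fun M => lt_of_lt_of_le one_pos (st_one_le M)
  have hexp : ∀ n ω, Real.exp (F n ω) = slNorm (cocycleP A n ω) := fun n ω => by
    rw [hF, Real.exp_log (hpos _)]
  have F0 : ∀ n ω, 0 ≤ F n ω := fun n ω => by
    rw [hF]; exact Real.log_nonneg (st_one_le _)
  have Fsub : ∀ n m ω, F (n + m) ω ≤ F n ω + F m (shift n ω) := by
    intro n m ω
    rw [← Real.exp_le_exp, Real.exp_add, hexp, hexp, hexp, st_cocycleP_add, mul_comm (slNorm _)]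
    exact st_slNorm_mul _ _
  have Fav : ∀ (n l : ℕ) (ω : ℤ → 𝒜), Real.exp (F (l + l) (shift n ω)) * Real.exp (F (n + l) ω) ≤
      4 * (Real.exp (F (n + l + l) ω) * Real.exp (F l (shift n ω)) +
        Real.exp (F l (shift ((n + l : ℕ) : ℤ) ω)) * Real.exp (F n ω)) := by
    intro n l ω
    simp only [hexp]
    have := st_aval (cocycleP A l (shift ((n + l : ℕ) : ℤ) ω)) (cocycleP A l (shift n ω))
      (cocycleP A n ω)
    rw [st_cocycleP_add A (n + l) l, st_cocycleP_add A n l, st_cocycleP_add A l l,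
      st_shift_shift, ← Nat.cast_add, ← mul_assoc]
    exact this
  have Fub : ∀ n : ℕ, ∀ ω ∈ Ω, F n ω ≤ C * n := by
    intro n
    induction n with
    | zero =>
      intro ω hω
      rw [hF]
      have h1 : slNorm (1 : SL2) ≤ 1 := by
        unfold slNorm matNorm
        refine ContinuousLinearMap.opNorm_le_bound _ (by positivity) ?_
        intro x
        simp [Matrix.toLpLin_one]
      simp only [cocycleP, Nat.cast_zero, mul_zero]
      exact Real.log_nonpos (hpos _).le h1
    | succ n ih =>
      intro ω hω
      have s := Fsub n 1 ω
      have h1 : F 1 (shift n ω) ≤ C := by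
        rw [hF]
        have : cocycleP A 1 (shift n ω) = A (shift n ω) := by
          have e : shift (0 : ℤ) (shift n ω) = shift n ω := by
            rw [st_shift_shift, add_zero]
          simp [cocycleP, e]
        rw [this]
        exact hC _ (hinv _ hω _)
      have := ih ω hω
      push_cast
      linarith
  have hbdd : ∀ n, BddAbove (F n '' Ω) := fun n => ⟨C * n, by
    rintro _ ⟨ω, hω, rfl⟩; exact Fub n ω hω⟩
  let G : ℕ → ℝ := fun n => sSup (F n '' Ω)
  have hne : ∀ n, (F n '' Ω).Nonempty := fun n => ⟨_, ω0, hω0, rfl⟩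
  have FG : ∀ n, ∀ ω ∈ Ω, F n ω ≤ G n := fun n ω hω => le_csSup (hbdd n) ⟨ω, hω, rfl⟩
  have hG : Subadditive G := by
    intro m n
    apply csSup_le (hne _)
    rintro _ ⟨ω, hω, rfl⟩
    have := Fsub m n ω
    have := FG m ω hω
    have := FG n _ (hinv _ hω m)
    linarith
  have G0 : ∀ n, 0 ≤ G n := fun n => (F0 n ω0).trans (FG n ω0 hω0)
  have hGb : BddBelow (Set.range fun n => G n / n) := ⟨0, by
    rintro _ ⟨n, rfl⟩
    exact div_nonneg (G0 n) (Nat.cast_nonneg n)⟩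
  have hlim := hG.tendsto_lim hGb
  have hle : ∀ n : ℕ, n ≠ 0 → hG.lim ≤ G n / n := fun n hn => hG.lim_le_div hGb hn
  generalize hG.lim = Λ at hlim hle
  have hΛ0 : 0 ≤ Λ := ge_of_tendsto' hlim fun n => div_nonneg (G0 n) (Nat.cast_nonneg n)
  have hinf : ∀ n : ℕ, 1 ≤ n → ∀ x, (∀ ω ∈ Ω, F n ω ≤ x) → n * Λ ≤ x := by
    intro n hn x hx
    have h1 := hle n (by omega)
    have hn' : (0:ℝ) < n := by exact_mod_cast hn
    rw [le_div_iff₀ hn'] at h1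
    have : G n ≤ x := csSup_le (hne n) (by rintro _ ⟨ω, hω, rfl⟩; exact hx ω hω)
    linarith
  have hup1 : ∀ δ > 0, ∃ n0 : ℕ, 1 ≤ n0 ∧ ∀ n ≥ n0, ∀ ω ∈ Ω, F n ω < (Λ + δ) * n := by
    intro δ hδ
    have := (hlim.eventually (gt_mem_nhds (show Λ < Λ + δ by linarith))).and
      (eventually_ge_atTop 1)
    obtain ⟨n0, h⟩ := eventually_atTop.1 this
    refine ⟨max n0 1, le_max_right _ _, fun n hn ω hω => ?_⟩
    have ⟨h1, h2⟩ := h n (le_trans (le_max_left _ _) hn)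
    have hn' : (0:ℝ) < n := by exact_mod_cast h2
    rw [div_lt_iff₀ hn'] at h1
    exact (FG n ω hω).trans_lt h1
  have hup : ∀ δ > 0, ∃ C0 : ℝ, 0 ≤ C0 ∧ ∀ n : ℕ, ∀ ω ∈ Ω, F n ω ≤ (Λ + δ) * n + C0 := by
    intro δ hδ
    obtain ⟨n0, -, h⟩ := hup1 δ hδ
    refine ⟨|C| * n0, by positivity, fun n ω hω => ?_⟩
    by_cases hn : n0 ≤ n
    · have := h n hn ω hω
      have : 0 ≤ |C| * n0 := by positivity
      linarith
    · have h1 := Fub n ω hω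
      have h2 : C * n ≤ |C| * n := mul_le_mul_of_nonneg_right (le_abs_self C) (by positivity)
      have h3 : |C| * n ≤ |C| * n0 := mul_le_mul_of_nonneg_left
        (by exact_mod_cast (not_le.1 hn).le) (by positivity)
      have h4 : 0 ≤ (Λ + δ) * n := by positivity
      linarith
  have hlow : ∀ ε > 0, ∃ n1 : ℕ, ∀ n ≥ n1, ∀ ω ∈ Ω, (Λ - ε) * n ≤ F n ω := by
    intro ε hε
    rcases hΛ0.eq_or_lt with h | h
    · refine ⟨0, fun n _ ω hω => ?_⟩
      have := F0 n ω
      rw [← h]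
      have : 0 ≤ ε * n := by positivity
      linarith
    · obtain ⟨n1, hn1⟩ := st_lower Ω F Λ hinv F0 Fsub Fav hinf hup (by
        intro L0
        obtain ⟨L, hL, h⟩ := hD L0
        refine ⟨L, hL, fun ω hω ρ hρ => ?_⟩
        obtain ⟨t, ht, h⟩ := h ω hω ρ hρ
        exact ⟨t, ht, fun m hm => by rw [hF, hF, h m hm]⟩) (min (ε / 7) (Λ / 6))
        (lt_min (by positivity) (by positivity)) (by
          have := min_le_right (ε / 7) (Λ / 6); linarith)
      refine ⟨n1, fun n hn ω hω => le_trans ?_ (hn1 n hn ω hω)⟩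
      have := min_le_left (ε / 7) (Λ / 6)
      exact mul_le_mul_of_nonneg_right (by linarith) (Nat.cast_nonneg n)
  refine ⟨Λ, ?_⟩
  rw [Metric.tendstoUniformlyOn_iff]
  intro ε hε
  obtain ⟨n0, hn0, h0⟩ := hup1 ε hε
  obtain ⟨n1, h1⟩ := hlow (ε / 2) (by positivity)
  filter_upwards [eventually_ge_atTop n0, eventually_ge_atTop n1] with n hn hn' ω hω
  have e : cocycle A (n : ℤ) ω = cocycleP A n ω := by simp [cocycle]
  rw [e, ← hF, Real.dist_eq, abs_sub_lt_iff]
  have np : (0:ℝ) < n := by exact_mod_cast lt_of_lt_of_le hn0 hn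
  have a := h0 n hn ω hω
  have b := h1 n hn' ω hω
  rw [← le_div_iff₀ np] at b
  rw [← div_lt_iff₀ np] at a
  constructor <;> linarith

end

theorem st_gauss (α : ℝ) (hirr : Irrational α) (h0 : 0 < α) (h1 : α < 1) (n : ℕ) :
    Irrational (gaussMap^[n] α) ∧ 0 < gaussMap^[n] α ∧ gaussMap^[n] α < 1 := by
  induction n with
  | zero => exact ⟨hirr, h0, h1⟩
  | succ n ih =>
    rw [Function.iterate_succ_apply']
    obtain ⟨i, p, _⟩ := ih
    generalize gaussMap^[n] α = x at *
    have hi : Irrational (gaussMap x) := by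
      unfold gaussMap
      rw [one_div]
      exact (irrational_inv_iff.2 i).sub_intCast _
    have e : gaussMap x = Int.fract (1 / x) := rfl
    refine ⟨hi, ?_, ?_⟩
    · rcases (Int.fract_nonneg (1 / x)).eq_or_lt with h | h
      · exact absurd (e.trans h.symm) hi.ne_zero
      · rw [e]; exact h
    · rw [e]; exact Int.fract_lt_one _

theorem st_cf_pos (α : ℝ) (hirr : Irrational α) (h0 : 0 < α) (h1 : α < 1) (n : ℕ) :
    1 ≤ cfSeq α n := by
  obtain ⟨_, p, l⟩ := st_gauss α hirr h0 h1 n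
  unfold cfSeq
  apply Nat.le_floor
  rw [Nat.cast_one, le_div_iff₀ p]
  linarith

theorem st_split {β : Type*} {x l1 l2 : List β} (h : x <:+: l1 ++ l2) :
    x <:+: l2 ∨ ∃ p : List β, p.length < l1.length ∧ p ++ x <+: l1 ++ l2 := by
  obtain ⟨p, r, h⟩ := h
  by_cases hp : p.length < l1.length
  · exact Or.inr ⟨p, hp, r, h⟩
  · left
    have h1 : l1 <+: p ++ x ++ r := h ▸ List.prefix_append _ _
    have h2 : p <+: p ++ x ++ r := by rw [List.append_assoc]; exact List.prefix_append _ _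
    obtain ⟨s, rfl⟩ := List.prefix_of_prefix_length_le h1 h2 (by omega)
    rw [List.append_assoc, List.append_assoc, List.append_cancel_left_eq, ← List.append_assoc] at h
    exact ⟨s, r, h⟩

section blocks

variable {β : Type*} {u w π : List β} {a b : β}

theorem st_claim1 (h2 : w ++ u = π ++ [b, a]) (f1 : u.dropLast <+: π)
    (bs : List (List β)) (hbs : ∀ c ∈ bs, c = u ∨ c = u ++ w) :
    u ++ u.dropLast <+: bs.flatten ++ u ++ u := by
  have head : ∀ bs : List (List β), (∀ c ∈ bs, c = u ∨ c = u ++ w) → u <+: bs.flatten ++ u := by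
    intro bs hbs
    cases bs with
    | nil => simp
    | cons c bs =>
      rcases hbs c (by simp) with rfl | rfl <;> simp
  cases bs with
  | nil => simpa using List.dropLast_prefix u
  | cons c bs =>
    have hh := head bs (fun c hc => hbs c (by simp [hc]))
    obtain ⟨y, hy⟩ := hh
    rcases hbs c (by simp) with rfl | rfl
    · rw [List.flatten_cons, List.append_assoc, List.append_assoc, List.prefix_append_right_inj,
        ← List.append_assoc, ← hy]
      exact (List.dropLast_prefix _).trans ((List.prefix_append _ _).trans (List.prefix_append _ _))
    · rw [List.flatten_cons, List.append_assoc, List.append_assoc, List.append_assoc,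
        List.prefix_append_right_inj, ← List.append_assoc _ u u, ← hy]
      refine f1.trans ((List.prefix_append π [b, a]).trans ?_)
      rw [← h2]
      simp

theorem st_claim2 (hu : u ≠ []) (hw : w ≠ []) (hwu : w <+: u)
    (h1 : u ++ w = π ++ [a, b]) (h2 : w ++ u = π ++ [b, a]) (f1 : u.dropLast <+: π)
    (x : List β) (hx : x.length + 1 ≤ u.length)
    (bs : List (List β)) (hbs : ∀ c ∈ bs, c = u ∨ c = u ++ w) (h : x <:+: bs.flatten ++ u) :
    x <:+: u ++ u.dropLast := by
  have hw1 : 1 ≤ w.length := List.length_pos_iff.2 hw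
  have hwl : w.length ≤ u.length := hwu.length_le
  have hπ : π.length + 2 = u.length + w.length := by
    have := congrArg List.length h1
    simp at this; omega
  have f2 : π <+: u ++ u.dropLast := by
    have e0 : π <+: u ++ w := h1 ▸ List.prefix_append _ _
    have e1 : π <+: u ++ u := e0.trans (by simpa using hwu)
    have e2 : u ++ u.dropLast <+: u ++ u := by simpa using List.dropLast_prefix u
    exact List.prefix_of_prefix_length_le e1 e2 (by simp; omega)
  induction bs with
  | nil => exact (by simpa using h : x <:+: u).trans (List.prefix_append _ _).isInfix
  | cons c bs ih =>
    have hbs' : ∀ c ∈ bs, c = u ∨ c = u ++ w := fun c hc => hbs c (by simp [hc])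
    have head : u <+: bs.flatten ++ u := by
      cases bs with
      | nil => simp
      | cons c bs => rcases hbs' c (by simp) with rfl | rfl <;> simp
    rw [List.flatten_cons, List.append_assoc] at h
    rcases st_split h with h | ⟨p, hp, h⟩
    · exact ih hbs' h
    have hZ : u ++ u.dropLast <+: c ++ (bs.flatten ++ u) := by
      rcases hbs c (by simp) with rfl | rfl
      · rw [List.prefix_append_right_inj]
        exact (List.dropLast_prefix _).trans head
      · rw [List.append_assoc, List.prefix_append_right_inj]
        refine f1.trans ((List.prefix_append π [b, a]).trans ?_)
        rw [← h2, List.prefix_append_right_inj]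
        exact head
    by_cases hpu : p.length < u.length
    · have := List.prefix_of_prefix_length_le h hZ (by simp; omega)
      exact (List.suffix_append p x).isInfix.trans this.isInfix
    · rcases hbs c (by simp) with rfl | rfl
      · exact absurd hp hpu
      · have hup : u <+: p ++ x := by
          refine List.prefix_of_prefix_length_le (l₃ := u ++ w ++ (bs.flatten ++ u)) ?_ h
            (by simp; omega)
          simp
        have hup' : u <+: p := List.prefix_of_prefix_length_le hup (List.prefix_append _ _)
          (by omega)
        obtain ⟨p', rfl⟩ := hup'
        rw [List.append_assoc, List.append_assoc, List.prefix_append_right_inj] at h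
        have h3 : π <+: w ++ (bs.flatten ++ u) := by
          refine (List.prefix_append π [b, a]).trans ?_
          rw [← h2, List.prefix_append_right_inj]
          exact head
        have := List.prefix_of_prefix_length_le h h3 (by simp at hp ⊢; omega)
        exact (List.suffix_append p' x).isInfix.trans (this.trans f2).isInfix

theorem st_claim3 (hu : u ≠ []) (hwu : w <+: u)
    (h2 : w ++ u = π ++ [b, a]) (f1 : u.dropLast <+: π)
    (x : List β) (hx : 4 * u.length ≤ x.length)
    (bs : List (List β)) (hbs : ∀ c ∈ bs, c = u ∨ c = u ++ w) (h : x <:+: bs.flatten) :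
    u ++ u.dropLast <:+: x := by
  have hu1 : 1 ≤ u.length := List.length_pos_iff.2 hu
  have hwl : w.length ≤ u.length := hwu.length_le
  induction bs with
  | nil =>
    have := h.length_le
    simp only [List.flatten_nil, List.length_nil] at this; omega
  | cons c bs ih =>
    have hbs' : ∀ c ∈ bs, c = u ∨ c = u ++ w := fun c hc => hbs c (by simp [hc])
    have hc : c.length ≤ 2 * u.length := by
      rcases hbs c (by simp) with rfl | rfl
      · omega
      · simp; omega
    rw [List.flatten_cons] at h
    rcases st_split h with h | ⟨p, hp, h⟩
    · exact ih hbs' h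
    have hcp : c <+: p ++ x := List.prefix_of_prefix_length_le (List.prefix_append _ _) h
      (by simp; omega)
    obtain ⟨y, hy⟩ := hcp
    rw [← hy, List.prefix_append_right_inj] at h
    have hlen := congrArg List.length hy
    simp at hlen
    have hz : u ++ u.dropLast <+: y := by
      refine List.prefix_of_prefix_length_le (st_claim1 h2 f1 bs hbs') ?_ (by simp; omega)
      rw [List.append_assoc]
      exact h.trans (List.prefix_append _ _)
    have hyx : y <:+ x := by
      refine List.suffix_of_suffix_length_le (l₃ := p ++ x) ?_ (List.suffix_append _ _) (by omega)
      rw [← hy]; exact List.suffix_append _ _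
    exact hz.isInfix.trans hyx.isInfix

end blocks

theorem st_swap (α : ℝ) (k : ℕ) : ∃ (π : List (Fin 2)) (a b : Fin 2),
    sturmW α (k + 1) ++ sturmW α k = π ++ [a, b] ∧
    sturmW α k ++ sturmW α (k + 1) = π ++ [b, a] := by
  induction k with
  | zero => exact ⟨[], 0, 1, by simp [sturmW], by simp [sturmW]⟩
  | succ k ih =>
    cases k with
    | zero =>
      refine ⟨List.replicate (cfSeq α 0 - 1) 0, 1, 0, by simp [sturmW], ?_⟩
      simp only [sturmW]
      rw [← List.append_assoc]
      have : [(0 : Fin 2)] ++ List.replicate (cfSeq α 0 - 1) 0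
          = List.replicate (cfSeq α 0 - 1) 0 ++ [0] := by
        rw [← List.replicate_succ', List.singleton_append, List.replicate_succ]
      rw [this]; simp
    | succ k =>
      obtain ⟨π, a, b, h1, h2⟩ := ih
      have comm : ∀ (c : ℕ) (l : List (Fin 2)), l ++ (List.replicate c l).flatten
          = (List.replicate c l).flatten ++ l := by
        intro c l
        have e : (List.replicate (c + 1) l).flatten = (List.replicate c l).flatten ++ l := by
          rw [List.replicate_succ']; simp
        rw [← e, List.replicate_succ]; simp
      refine ⟨(List.replicate (cfSeq α (k + 1)) (sturmW α (k + 2))).flatten ++ π, b, a, ?_, ?_⟩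
      · simp only [sturmW] at h1 h2 ⊢
        rw [List.append_assoc, h2, List.append_assoc]
      · have h3 : sturmW α (k + 1 + 2) = (List.replicate (cfSeq α (k + 1)) (sturmW α (k + 2))).flatten
            ++ sturmW α (k + 1) := rfl
        change sturmW α (k + 2) ++ sturmW α (k + 1 + 2) = _
        rw [h3, ← List.append_assoc, comm, List.append_assoc, List.append_assoc]
        congr 1

theorem st_ne (α : ℝ) (k : ℕ) : sturmW α k ≠ [] := by
  induction k using Nat.strong_induction_on with
  | _ k ih =>
    match k with
    | 0 => simp [sturmW]
    | 1 => simp [sturmW]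
    | 2 => simp [sturmW]
    | k + 3 =>
      simp only [sturmW]
      intro h
      exact ih (k + 1) (by omega) (List.append_eq_nil_iff.1 h).2

theorem st_succ (α : ℝ) (hc : ∀ n, 1 ≤ cfSeq α n) (k : ℕ) : ∃ d : ℕ,
    sturmW α (k + 3) = sturmW α (k + 2) ++
      ((List.replicate d (sturmW α (k + 2))).flatten ++ sturmW α (k + 1)) ∧
    sturmW α (k + 3) = (List.replicate d (sturmW α (k + 2))).flatten ++
      (sturmW α (k + 2) ++ sturmW α (k + 1)) := by
  obtain ⟨d, hd⟩ : ∃ d, cfSeq α (k + 1) = d + 1 := ⟨cfSeq α (k + 1) - 1, by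
    have := hc (k + 1); omega⟩
  refine ⟨d, ?_, ?_⟩
  · simp only [sturmW]
    rw [hd, List.replicate_succ, List.flatten_cons, List.append_assoc]
  · simp only [sturmW]
    rw [hd, List.replicate_succ']
    simp

theorem st_len (α : ℝ) (hc : ∀ n, 1 ≤ cfSeq α n) (k : ℕ) :
    k + 1 ≤ (sturmW α (k + 2)).length := by
  induction k with
  | zero => simp [sturmW]
  | succ k ih =>
    obtain ⟨d, h, -⟩ := st_succ α hc k
    have := congrArg List.length h
    rw [List.length_append, List.length_append] at this
    have := List.length_pos_iff.2 (st_ne α (k + 1))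
    change k + 1 + 1 ≤ (sturmW α (k + 3)).length
    omega

theorem st_suffix (α : ℝ) (m : ℕ) : sturmW α m <:+ sturmW α (m + 2) := by
  cases m with
  | zero => simp [sturmW]
  | succ m =>
    change _ <:+ (List.replicate (cfSeq α (m + 1)) (sturmW α (m + 2))).flatten ++ sturmW α (m + 1)
    exact List.suffix_append _ _

theorem st_large (α : ℝ) (m j : ℕ) : sturmW α m <:+ sturmW α (m + 2 * j) := by
  induction j with
  | zero => simp
  | succ j ih => exact ih.trans (st_suffix α (m + 2 * j))

theorem st_blocks (α : ℝ) (hc : ∀ n, 1 ≤ cfSeq α n) (n m : ℕ) :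
    ∃ bs : List (List (Fin 2)),
      (∀ c ∈ bs, c = sturmW α (n + 2) ∨ c = sturmW α (n + 2) ++ sturmW α (n + 1)) ∧
      sturmW α (n + 2 + m) = bs.flatten := by
  induction m using Nat.strong_induction_on with
  | _ m ih =>
    match m with
    | 0 => exact ⟨[sturmW α (n + 2)], by simp, by simp⟩
    | 1 =>
      obtain ⟨d, -, h⟩ := st_succ α hc n
      refine ⟨List.replicate d (sturmW α (n + 2)) ++ [sturmW α (n + 2) ++ sturmW α (n + 1)],
        ?_, ?_⟩
      · intro c hc
        rw [List.mem_append] at hc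
        rcases hc with hc | hc
        · exact Or.inl (List.eq_of_mem_replicate hc)
        · exact Or.inr (by simpa using hc)
      · rw [List.flatten_append]
        simpa using h
    | m + 2 =>
      obtain ⟨b1, hb1, e1⟩ := ih (m + 1) (by omega)
      obtain ⟨b0, hb0, e0⟩ := ih m (by omega)
      refine ⟨(List.replicate (cfSeq α (n + 1 + m + 1)) b1).flatten ++ b0, ?_, ?_⟩
      · intro c hc
        rw [List.mem_append] at hc
        rcases hc with hc | hc
        · rw [List.mem_flatten] at hc
          obtain ⟨l, hl, hc⟩ := hc
          rw [List.eq_of_mem_replicate hl] at hc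
          exact hb1 c hc
        · exact hb0 c hc
      · have e : n + 2 + (m + 2) = (n + 1 + m) + 3 := by omega
        have e' : n + 2 + (m + 1) = (n + 1 + m) + 2 := by omega
        have e'' : n + 2 + m = (n + 1 + m) + 1 := by omega
        rw [e'] at e1
        rw [e''] at e0
        rw [e]
        simp only [sturmW]
        rw [e1, e0, List.flatten_append]
        congr 1
        generalize cfSeq α (n + 1 + m + 1) = d
        induction d with
        | zero => simp
        | succ d ih => simp [List.replicate_succ, ih]

theorem st_recur (α : ℝ) (hc : ∀ n, 1 ≤ cfSeq α n) (q0 : ℕ) :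
    ∃ q ≥ q0, ∀ ω ∈ sturmΩ α, ∀ ρ ∈ sturmΩ α, ∀ i j : ℤ,
      word ρ j (q - 1) <:+: word ω i (4 * q) := by
  -- take `u = S (q0+3)`, `w = S (q0+2)`
  refine ⟨(sturmW α (q0 + 3)).length, ?_, ?_⟩
  · have := st_len α hc (q0 + 1)
    have e : q0 + 1 + 2 = q0 + 3 := rfl
    rw [e] at this
    omega
  intro ω hω ρ hρ i j
  have hu := st_ne α (q0 + 3)
  have hw := st_ne α (q0 + 2)
  have hwu : sturmW α (q0 + 2) <+: sturmW α (q0 + 3) := by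
    obtain ⟨d, h, -⟩ := st_succ α hc q0
    rw [h]; exact List.prefix_append _ _
  obtain ⟨π, a, b, h1, h2⟩ := st_swap α (q0 + 2)
  change sturmW α (q0 + 3) ++ _ = _ at h1
  change _ ++ sturmW α (q0 + 3) = _ at h2
  have hBl := st_blocks α hc (q0 + 1)
  change ∀ m, ∃ bs : List (List (Fin 2)),
      (∀ c ∈ bs, c = sturmW α (q0 + 3) ∨ c = sturmW α (q0 + 3) ++ sturmW α (q0 + 2)) ∧
      sturmW α (q0 + 3 + m) = bs.flatten at hBl
  have hfac : ∀ ω ∈ sturmΩ α, ∀ (i : ℤ) (n : ℕ), ∃ bs : List (List (Fin 2)),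
      (∀ c ∈ bs, c = sturmW α (q0 + 3) ∨ c = sturmW α (q0 + 3) ++ sturmW α (q0 + 2)) ∧
      word ω i n <:+: bs.flatten := by
    intro ω hω i n
    obtain ⟨m, hm⟩ := hω i n
    obtain ⟨bs, hbs, e⟩ := hBl (m + 2 * (q0 + 3) - (q0 + 3))
    refine ⟨bs, hbs, hm.trans ?_⟩
    rw [← e]
    have e2 : q0 + 3 + (m + 2 * (q0 + 3) - (q0 + 3)) = m + 2 * (q0 + 3) := by omega
    rw [e2]
    exact (st_large α m (q0 + 3)).isInfix
  generalize sturmW α (q0 + 3) = u at *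
  generalize sturmW α (q0 + 2) = w at *
  have hw1 : 1 ≤ w.length := List.length_pos_iff.2 hw
  have hu1 : 1 ≤ u.length := List.length_pos_iff.2 hu
  have f1 : u.dropLast <+: π := by
    have e1 : u.dropLast <+: u ++ w := (List.dropLast_prefix _).trans (List.prefix_append _ _)
    have e2 : π <+: u ++ w := h1 ▸ List.prefix_append _ _
    refine List.prefix_of_prefix_length_le e1 e2 ?_
    have := congrArg List.length h1
    simp at this ⊢; omega
  have lw : ∀ (ω : ℤ → Fin 2) i n, (word ω i n).length = n := by simp [word]
  obtain ⟨bs, hbs, h⟩ := hfac ρ hρ j (u.length - 1)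
  have c2 := st_claim2 hu hw hwu h1 h2 f1 _ (by rw [lw]; omega) bs hbs
    (h.trans (List.prefix_append _ _).isInfix)
  obtain ⟨bs', hbs', h'⟩ := hfac ω hω i (4 * u.length)
  have c3 := st_claim3 hu hwu h2 f1 _ (by rw [lw]) bs' hbs' h'
  exact c2.trans c3

theorem st_word_eq {β : Type*} (ω : ℤ → β) (k : ℤ) (n : ℕ) :
    word ω k n = (List.range n).map fun i : ℕ => ω (k + (i : ℤ)) := by
  unfold word
  change List.map (fun i : ℤ => ω (k + i)) ((List.range n).flatMap fun a : ℕ => [(a : ℤ)]) = _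
  generalize List.range n = l
  induction l with
  | nil => rfl
  | cons c l ih => simpa [List.flatMap_cons] using ih

theorem st_word_infix {β : Type*} {ω ρ : ℤ → β} {i j : ℤ} {n m : ℕ}
    (h : word ρ j n <:+: word ω i m) :
    ∃ t : ℕ, t + n ≤ m ∧ ∀ s : ℕ, s < n → ω (i + t + s) = ρ (j + s) := by
  obtain ⟨p, r, h⟩ := h
  have hl := congrArg List.length h
  simp [word] at hl
  refine ⟨p.length, by omega, fun s hs => ?_⟩
  have := congrArg (fun l => l[p.length + s]?) h
  simp only [st_word_eq] at this
  rw [List.append_assoc, List.getElem?_append_right (by omega),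
    List.getElem?_append_left (by simp; omega)] at this
  simp only [Nat.add_sub_cancel_left] at this
  rw [List.getElem?_map, List.getElem?_map, List.getElem?_range hs,
    List.getElem?_range (by omega)] at this
  simp at this
  rw [this]; congr 1; ring

/-- Every locally constant `SL(2,ℝ)`-valued function on a Sturmian
subshift is uniform. -/
theorem statement18 (α : ℝ) (hirr : Irrational α) (h0 : 0 < α) (h1 : α < 1)
    (A : (ℤ → Fin 2) → SL2) (hA : LocConstOn (sturmΩ α) A) :
    IsUniform (sturmΩ α) A := by
  have hc := st_cf_pos α hirr h0 h1
  obtain ⟨N, hN⟩ := hA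
  have hinv : ∀ ω ∈ sturmΩ α, ∀ n : ℕ, shift n ω ∈ sturmΩ α := by
    intro ω hω n i k
    obtain ⟨m, hm⟩ := hω (i + n) k
    refine ⟨m, ?_⟩
    have : word (shift n ω) i k = word ω (i + n) k := by
      simp only [word, shift]
      congr 1
      funext s
      congr 1
      ring
    rw [this]; exact hm
  have hfin : (A '' sturmΩ α).Finite := by
    classical
    let g : (Set.Icc (-(N:ℤ)) N → Fin 2) → SL2 := fun p =>
      if h : ∃ ω ∈ sturmΩ α, ∀ i : Set.Icc (-(N:ℤ)) N, ω i = p i then A h.choose else 1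
    refine (Set.finite_range g).subset ?_
    rintro _ ⟨ω, hω, rfl⟩
    refine ⟨fun i => ω i, ?_⟩
    have h : ∃ ρ ∈ sturmΩ α, ∀ i : Set.Icc (-(N:ℤ)) N, ρ i = ω i := ⟨ω, hω, fun _ => rfl⟩
    have e : g (fun i => ω i) = A h.choose := dif_pos h
    rw [e]
    refine hN _ h.choose_spec.1 _ hω fun i hi => ?_
    exact h.choose_spec.2 ⟨i, Set.mem_Icc.2 (abs_le.1 hi)⟩
  obtain ⟨C, hC⟩ := (hfin.image fun M => Real.log (slNorm M)).bddAbove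
  refine st_uniform _ A hinv C (fun ω hω => hC ⟨_, ⟨ω, hω, rfl⟩, rfl⟩) ?_
  intro L0
  obtain ⟨q, hq, hrec⟩ := st_recur α hc (L0 + 16 * N + 20)
  refine ⟨q - 1 - 2 * N, by omega, fun ω hω ρ hρ => ?_⟩
  obtain ⟨t, ht, heq⟩ := st_word_infix (hrec ω hω ρ hρ (-N) (-N))
  refine ⟨t, by omega, ?_⟩
  intro m
  induction m with
  | zero => intro _; rfl
  | succ m ih =>
    intro hm
    simp only [cocycleP]
    rw [ih (by omega)]
    congr 1
    refine hN _ (hinv _ (hinv _ hω _) _) _ (hinv _ hρ _) fun i hi => ?_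
    obtain ⟨l1, l2⟩ := abs_le.1 hi
    have := heq (i + m + N).toNat (by omega)
    have e : (((i + m + N).toNat : ℕ) : ℤ) = i + m + N := Int.toNat_of_nonneg (by omega)
    rw [e] at this
    simp only [shift]
    convert this using 2 <;> ring
end
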